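/- Let n₁, n₂ ≥ 1 be integers and μ₁, μ₂ ∈ ℝ. Let u₁ be a positive minimal C² solution of −Δ₁u₁ = μ₁u₁ on ℝ^{n₁}×(0,∞) and u₂ a positive minimal C² solution of −Δ₂u₂ = μ₂u₂ on ℝ^{n₂}×(0,∞). Then the product u(x₁,y₁,x₂,y₂) = u₁(x₁,y₁)·u₂(x₂,y₂) is a positive minimal C² solution of −(Δ₁ + Δ₂)u = (μ₁+μ₂)u on ℝ^{n₁}×(0,∞)×ℝ^{n₂}×(0,∞): every C² solution v of −(Δ₁+Δ₂)v = (μ₁+μ₂)v with 0 ≤ v ≤ u equals C·u for some constant C ∈ [0,1]. -/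

import Mathlib

open Real Topology

noncomputable def lapX {n : ℕ} (u : EuclideanSpace ℝ (Fin n) → ℝ → ℝ)
    (x : EuclideanSpace ℝ (Fin n)) (y : ℝ) : ℝ :=
  ∑ i : Fin n, iteratedDeriv 2 (fun t : ℝ => u (x + t • EuclideanSpace.single i (1:ℝ)) y) 0

noncomputable def hypLap (n : ℕ) (u : EuclideanSpace ℝ (Fin n) → ℝ → ℝ)
    (x : EuclideanSpace ℝ (Fin n)) (y : ℝ) : ℝ :=
  y ^ 2 * (lapX u x y + iteratedDeriv 2 (u x) y) - ((n : ℝ) - 1) * y * deriv (u x) y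

noncomputable def hypLap1 (n₁ n₂ : ℕ)
    (u : EuclideanSpace ℝ (Fin n₁) → ℝ → EuclideanSpace ℝ (Fin n₂) → ℝ → ℝ)
    (x₁ : EuclideanSpace ℝ (Fin n₁)) (y₁ : ℝ)
    (x₂ : EuclideanSpace ℝ (Fin n₂)) (y₂ : ℝ) : ℝ :=
  hypLap n₁ (fun x y => u x y x₂ y₂) x₁ y₁

noncomputable def hypLap2 (n₁ n₂ : ℕ)
    (u : EuclideanSpace ℝ (Fin n₁) → ℝ → EuclideanSpace ℝ (Fin n₂) → ℝ → ℝ)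
    (x₁ : EuclideanSpace ℝ (Fin n₁)) (y₁ : ℝ)
    (x₂ : EuclideanSpace ℝ (Fin n₂)) (y₂ : ℝ) : ℝ :=
  hypLap n₂ (u x₁ y₁) x₂ y₂

/-- `w` is a positive minimal C² `μ`-harmonic function on the half-space model `ℍ^{n+1}`. -/
def MinimalHarmonic (n : ℕ) (μ : ℝ) (w : EuclideanSpace ℝ (Fin n) → ℝ → ℝ) : Prop :=
  (∀ x, ∀ y : ℝ, 0 < y → 0 < w x y) ∧
  ContDiffOn ℝ 2 (fun p : EuclideanSpace ℝ (Fin n) × ℝ => w p.1 p.2)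
    {p : EuclideanSpace ℝ (Fin n) × ℝ | 0 < p.2} ∧
  (∀ x, ∀ y : ℝ, 0 < y → -(hypLap n w x y) = μ * w x y) ∧
  ∀ v : EuclideanSpace ℝ (Fin n) → ℝ → ℝ,
    ContDiffOn ℝ 2 (fun p : EuclideanSpace ℝ (Fin n) × ℝ => v p.1 p.2)
      {p : EuclideanSpace ℝ (Fin n) × ℝ | 0 < p.2} →
    (∀ x, ∀ y : ℝ, 0 < y → -(hypLap n v x y) = μ * v x y) →
    (∀ x, ∀ y : ℝ, 0 < y → 0 ≤ v x y ∧ v x y ≤ w x y) →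
    ∃ C : ℝ, C ∈ Set.Icc (0:ℝ) 1 ∧ ∀ x, ∀ y : ℝ, 0 < y → v x y = C * w x y

open MeasureTheory

/-! ### Single factor in logarithmic coordinates -/

abbrev HH (n : ℕ) := EuclideanSpace ℝ (Fin n) × ℝ

/-- directional derivative -/
noncomputable def pdv {V : Type*} [NormedAddCommGroup V] [NormedSpace ℝ V] (e : V) (φ : V → ℝ) : V → ℝ :=
  fun q => fderiv ℝ φ q e

noncomputable def dirX {n : ℕ} (i : Fin n) : HH n := (EuclideanSpace.single i (1:ℝ), 0)

noncomputable def dirS (n : ℕ) : HH n := (0, 1)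

/-- the hyperbolic Laplacian in the coordinates `(x, s)`, `y = exp s`. -/
noncomputable def slap (n : ℕ) (φ : HH n → ℝ) (q : HH n) : ℝ :=
  exp (2 * q.2) * ∑ i : Fin n, pdv (dirX i) (pdv (dirX i) φ) q
    + pdv (dirS n) (pdv (dirS n) φ) q - n * pdv (dirS n) φ q

section pdvlemmas
variable {V : Type*} [NormedAddCommGroup V] [NormedSpace ℝ V]

lemma pdv_eq {φ : V → ℝ} {q e : V} {c : ℝ} (hφ : DifferentiableAt ℝ φ q)
    (h : HasDerivAt (fun t : ℝ => φ (q + t • e)) c 0) : pdv e φ q = c := by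
  have h1 : HasLineDerivAt ℝ φ c q e := h
  exact (hφ.hasFDerivAt.hasLineDerivAt e).unique h1

lemma hasDerivAt_line {φ : V → ℝ} (hφ : Differentiable ℝ φ) (q e : V) (t : ℝ) :
    HasDerivAt (fun t : ℝ => φ (q + t • e)) (pdv e φ (q + t • e)) t := by
  have h1 : HasDerivAt (fun t : ℝ => q + t • e) e t := by
    simpa using ((hasDerivAt_id t).smul_const e).const_add q
  exact (hφ (q + t • e)).hasFDerivAt.comp_hasDerivAt t h1

lemma pdv_contDiff {φ : V → ℝ} {m : WithTop ℕ∞} (hφ : ContDiff ℝ (m+1) φ) (e : V) :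
    ContDiff ℝ m (pdv e φ) := by
  unfold pdv
  exact (hφ.fderiv_right le_rfl).clm_apply contDiff_const

lemma pdv_contDiff1 {φ : V → ℝ} (hφ : ContDiff ℝ 2 φ) (e : V) :
    ContDiff ℝ 1 (pdv e φ) := pdv_contDiff (m := 1) (by simpa [one_add_one_eq_two] using hφ) e

lemma pdv_cont {φ : V → ℝ} (hφ : ContDiff ℝ 1 φ) (e : V) :
    Continuous (pdv e φ) := (pdv_contDiff (m := 0) (by simpa using hφ) e).continuous

lemma pdv_mul {φ ψ : V → ℝ} (hφ : Differentiable ℝ φ) (hψ : Differentiable ℝ ψ) (e q : V) :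
    pdv e (fun q => φ q * ψ q) q = pdv e φ q * ψ q + φ q * pdv e ψ q := by
  unfold pdv
  rw [fderiv_fun_mul (hφ q) (hψ q)]
  simp; ring

lemma pdv_support {φ : V → ℝ} (h : HasCompactSupport φ) (e : V) : HasCompactSupport (pdv e φ) :=
  h.fderiv_apply ℝ e

/-- iterated derivative along a line as second directional derivative -/
lemma iteratedDeriv_line {φ : V → ℝ} (hφ : ContDiff ℝ 2 φ) (q e : V) :
    iteratedDeriv 2 (fun t : ℝ => φ (q + t • e)) 0 = pdv e (pdv e φ) q := by
  have h1 : deriv (fun t : ℝ => φ (q + t • e)) = fun t => pdv e φ (q + t • e) := by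
    ext t; exact (hasDerivAt_line (hφ.differentiable (by norm_num)) q e t).deriv
  rw [iteratedDeriv_succ, iteratedDeriv_one, h1]
  have := (hasDerivAt_line ((pdv_contDiff1 hφ e).differentiable (by norm_num)) q e 0).deriv
  simpa using this

end pdvlemmas

/-- conversion -/
lemma hypLap_eq_slap (n : ℕ) (u : EuclideanSpace ℝ (Fin n) → ℝ → ℝ)
    (hu : ContDiffOn ℝ 2 (fun p : EuclideanSpace ℝ (Fin n) × ℝ => u p.1 p.2)
    {p : EuclideanSpace ℝ (Fin n) × ℝ | 0 < p.2}) (x : EuclideanSpace ℝ (Fin n)) (s : ℝ) :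
    hypLap n u x (exp s) = slap n (fun q => u q.1 (exp q.2)) (x, s) := by
  set φ : HH n → ℝ := fun q => u q.1 (exp q.2) with hφdef
  have hφ : ContDiff ℝ 2 φ := by
    have h2 : ContDiff ℝ 2 (fun q : HH n => ((q.1, exp q.2) : HH n)) := by fun_prop
    rw [← contDiffOn_univ] at h2 ⊢
    exact hu.comp h2 (fun q _ => exp_pos _)
  unfold hypLap slap lapX
  have hX : ∀ i : Fin n, iteratedDeriv 2 (fun t : ℝ => u (x + t • EuclideanSpace.single i (1:ℝ)) (exp s)) 0
      = pdv (dirX i) (pdv (dirX i) φ) (x, s) := by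
    intro i
    rw [← iteratedDeriv_line hφ]
    congr 1
    ext t
    simp [hφdef, dirX]
  -- the vertical direction
  have hline : ∀ t : ℝ, HasDerivAt (fun t => u x (exp t)) (pdv (dirS n) φ (x, t)) t := by
    intro t
    have := hasDerivAt_line (hφ.differentiable (by norm_num)) ((x, 0) : HH n) (dirS n) t
    simpa [hφdef, dirS] using this
  have hline2 : ∀ t : ℝ, HasDerivAt (fun t => pdv (dirS n) φ (x, t)) (pdv (dirS n) (pdv (dirS n) φ) (x, t)) t := by
    intro t
    have := hasDerivAt_line ((pdv_contDiff1 hφ (dirS n)).differentiable (by norm_num)) ((x, 0) : HH n) (dirS n) t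
    simpa [dirS] using this
  have hD : ∀ y : ℝ, 0 < y → HasDerivAt (u x) (pdv (dirS n) φ (x, log y) * y⁻¹) y := by
    intro y hy
    have h := (hline (log y)).comp y (Real.hasDerivAt_log hy.ne')
    refine h.congr_of_eventuallyEq ?_
    filter_upwards [lt_mem_nhds hy] with z hz
    simp [exp_log hz]
  have hD2 : iteratedDeriv 2 (u x) (exp s) = pdv (dirS n) (pdv (dirS n) φ) (x, s) * (exp s)⁻¹ * (exp s)⁻¹
      - pdv (dirS n) φ (x, s) * ((exp s)^2)⁻¹ := by
    rw [iteratedDeriv_succ, iteratedDeriv_one]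
    have h1 : deriv (u x) =ᶠ[𝓝 (exp s)] fun y => pdv (dirS n) φ (x, log y) * y⁻¹ := by
      filter_upwards [lt_mem_nhds (exp_pos s)] with z hz
      exact (hD z hz).deriv
    rw [h1.deriv_eq]
    have h2 := (hline2 (log (exp s))).comp (exp s) (Real.hasDerivAt_log (exp_pos s).ne')
    have h3 := (h2.mul (hasDerivAt_inv (exp_pos s).ne')).deriv
    simp only [log_exp, Function.comp_def] at h3
    have h4 : deriv (fun y => pdv (dirS n) φ (x, log y) * y⁻¹) (exp s) = _ := h3
    rw [h4]; simp; ring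
  rw [hD2, (hD _ (exp_pos s)).deriv, Finset.sum_congr rfl (fun i _ => hX i), log_exp]
  have : exp (2 * s) = exp s ^ 2 := by rw [← exp_nat_mul]; norm_num
  rw [this]
  have := (exp_pos s).ne'
  field_simp
  ring

lemma byparts_dir {V : Type*} [NormedAddCommGroup V] [NormedSpace ℝ V] [FiniteDimensional ℝ V]
    [MeasurableSpace V] [BorelSpace V] (μ : Measure V) [μ.IsAddHaarMeasure]
    {φ ψ b : V → ℝ} (hφ : ContDiff ℝ 2 φ) (hψ : ContDiff ℝ 2 ψ) (hb : ContDiff ℝ 1 b)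
    (hs : HasCompactSupport φ) (e : V) :
    ∫ q, pdv e (fun q => b q * pdv e φ q) q * ψ q ∂μ = ∫ q, φ q * pdv e (fun q => b q * pdv e ψ q) q ∂μ := by
  have h1φ := pdv_contDiff1 hφ e
  have h1ψ := pdv_contDiff1 hψ e
  have hφ1 : ContDiff ℝ 1 φ := hφ.of_le (by norm_num)
  have hψ1 : ContDiff ℝ 1 ψ := hψ.of_le (by norm_num)
  have hsφ := pdv_support hs e
  have hA : ContDiff ℝ 1 (fun q => b q * pdv e φ q) := hb.mul h1φ
  have hB : ContDiff ℝ 1 (fun q => b q * pdv e ψ q) := hb.mul h1ψ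
  have hsA : HasCompactSupport (fun q => b q * pdv e φ q) := hsφ.mul_left
  have hsA' := pdv_support hsA e
  have cA := pdv_cont hA e
  have cB := pdv_cont hB e
  have cφ := pdv_cont hφ1 e
  have cψ := pdv_cont hψ1 e
  have e1 := integral_mul_fderiv_eq_neg_fderiv_mul_of_integrable (μ := μ) (f := fun q => b q * pdv e φ q) (g := ψ) (v := e)
    ((cA.mul hψ1.continuous).integrable_of_hasCompactSupport hsA'.mul_right)
    ((hA.continuous.mul cψ).integrable_of_hasCompactSupport hsA.mul_right)
    ((hA.continuous.mul hψ1.continuous).integrable_of_hasCompactSupport hsA.mul_right)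
    (fun x _ => (hA.differentiable (by norm_num)) x) (fun x _ => (hψ1.differentiable (by norm_num)) x)
  have e2 := integral_mul_fderiv_eq_neg_fderiv_mul_of_integrable (μ := μ) (f := φ) (g := fun q => b q * pdv e ψ q) (v := e)
    ((cφ.mul hB.continuous).integrable_of_hasCompactSupport hsφ.mul_right)
    ((hφ1.continuous.mul cB).integrable_of_hasCompactSupport hs.mul_right)
    ((hφ1.continuous.mul hB.continuous).integrable_of_hasCompactSupport hs.mul_right)
    (fun x _ => (hφ1.differentiable (by norm_num)) x) (fun x _ => (hB.differentiable (by norm_num)) x)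
  change _ = ∫ q, φ q * fderiv ℝ (fun q => b q * pdv e ψ q) q e ∂μ
  rw [e2]
  have e3 : ∫ q, pdv e (fun q => b q * pdv e φ q) q * ψ q ∂μ = - ∫ q, (b q * pdv e φ q) * fderiv ℝ ψ q e ∂μ := by
    rw [e1, neg_neg]; rfl
  rw [e3]
  congr 1
  apply integral_congr_ae
  filter_upwards with q
  simp only [pdv]; ring

lemma slap_cont {n : ℕ} {φ : HH n → ℝ} (hφ : ContDiff ℝ 2 φ) : Continuous (slap n φ) := by
  unfold slap
  have h1 := fun i : Fin n => pdv_cont (pdv_contDiff1 hφ (dirX i)) (dirX i)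
  have h2 := pdv_cont (pdv_contDiff1 hφ (dirS n)) (dirS n)
  have h3 := pdv_cont (hφ.of_le (by norm_num)) (dirS n)
  fun_prop

lemma slap_mul_rho {n : ℕ} {φ : HH n → ℝ} (hφ : ContDiff ℝ 2 φ) (q : HH n) :
    slap n φ q * exp (-(n * q.2)) =
      (∑ i : Fin n, pdv (dirX i) (fun q => exp (2 * q.2 - n * q.2) * pdv (dirX i) φ q) q)
      + pdv (dirS n) (fun q => exp (-(n * q.2)) * pdv (dirS n) φ q) q := by
  have d1 : Differentiable ℝ (fun q : HH n => exp (2 * q.2 - n * q.2)) := by fun_prop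
  have d2 : Differentiable ℝ (fun q : HH n => exp (-(n * q.2))) := by fun_prop
  have e1 : ∀ i : Fin n, pdv (dirX i) (fun q : HH n => exp (2 * q.2 - n * q.2)) q = 0 := by
    intro i
    apply pdv_eq (d1 q)
    simpa [dirX] using hasDerivAt_const (0:ℝ) (exp (2 * q.2 - n * q.2))
  have e2 : pdv (dirS n) (fun q : HH n => exp (-(n * q.2))) q = -n * exp (-(n * q.2)) := by
    apply pdv_eq (d2 q)
    have : HasDerivAt (fun t : ℝ => -(n * (q.2 + t))) (-(n:ℝ)) 0 := by
      simpa using (((hasDerivAt_id' (0:ℝ)).const_add q.2).const_mul (n:ℝ)).fun_neg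
    have h := this.exp
    simp only [add_zero] at h
    simp only [dirS, Prod.snd_add, Prod.smul_snd, smul_eq_mul, mul_one]
    convert h using 1
    ring
  have d3 := fun i : Fin n => (pdv_contDiff1 hφ (dirX i)).differentiable (by norm_num)
  have d4 := (pdv_contDiff1 hφ (dirS n)).differentiable (by norm_num)
  rw [pdv_mul d2 d4, e2]
  have : ∀ i : Fin n, pdv (dirX i) (fun q => exp (2 * q.2 - n * q.2) * pdv (dirX i) φ q) q
      = exp (2 * q.2) * exp (-(n * q.2)) * pdv (dirX i) (pdv (dirX i) φ) q := by
    intro i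
    rw [pdv_mul d1 (d3 i), e1, ← exp_add]
    ring_nf
  rw [Finset.sum_congr rfl (fun i _ => this i), ← Finset.mul_sum]
  unfold slap
  ring

instance haarHH (n : ℕ) : (volume : Measure (HH n)).IsAddHaarMeasure :=
  inferInstanceAs (((volume : Measure (EuclideanSpace ℝ (Fin n))).prod (volume : Measure ℝ)).IsAddHaarMeasure)

lemma byparts {n : ℕ} {φ ψ : HH n → ℝ} (hφ : ContDiff ℝ 2 φ) (hψ : ContDiff ℝ 2 ψ)
    (hs : HasCompactSupport φ) :
    ∫ q, slap n φ q * ψ q * exp (-(n * q.2)) = ∫ q, φ q * slap n ψ q * exp (-(n * q.2)) := by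
  have b1 : ContDiff ℝ 1 (fun q : HH n => exp (2 * q.2 - n * q.2)) := by fun_prop
  have b2 : ContDiff ℝ 1 (fun q : HH n => exp (-(n * q.2))) := by fun_prop
  have l : ∀ q, slap n φ q * ψ q * exp (-(n * q.2)) =
      (∑ i : Fin n, pdv (dirX i) (fun q => exp (2 * q.2 - n * q.2) * pdv (dirX i) φ q) q * ψ q)
      + pdv (dirS n) (fun q => exp (-(n * q.2)) * pdv (dirS n) φ q) q * ψ q := by
    intro q
    rw [mul_right_comm, slap_mul_rho hφ, add_mul, Finset.sum_mul]
  have r : ∀ q, φ q * slap n ψ q * exp (-(n * q.2)) =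
      (∑ i : Fin n, φ q * pdv (dirX i) (fun q => exp (2 * q.2 - n * q.2) * pdv (dirX i) ψ q) q)
      + φ q * pdv (dirS n) (fun q => exp (-(n * q.2)) * pdv (dirS n) ψ q) q := by
    intro q
    rw [mul_assoc, slap_mul_rho hψ, mul_add, Finset.mul_sum]
  have i1 : ∀ (b : HH n → ℝ) (e : HH n), ContDiff ℝ 1 b → Integrable (fun q => pdv e (fun q => b q * pdv e φ q) q * ψ q) := by
    intro b e hb
    refine Continuous.integrable_of_hasCompactSupport ?_ ?_
    · exact (pdv_cont (hb.mul (pdv_contDiff1 hφ e)) e).mul hψ.continuous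
    · exact (pdv_support ((pdv_support hs e).mul_left) e).mul_right
  have i2 : ∀ (b : HH n → ℝ) (e : HH n), ContDiff ℝ 1 b → Integrable (fun q => φ q * pdv e (fun q => b q * pdv e ψ q) q) := by
    intro b e hb
    refine Continuous.integrable_of_hasCompactSupport ?_ ?_
    · exact hφ.continuous.mul (pdv_cont (hb.mul (pdv_contDiff1 hψ e)) e)
    · exact hs.mul_right
  simp_rw [l, r]
  rw [integral_add (integrable_finsetSum _ fun i _ => i1 _ _ b1) (i1 _ _ b2),
    integral_add (integrable_finsetSum _ fun i _ => i2 _ _ b1) (i2 _ _ b2),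
    integral_finsetSum _ (fun i _ => i1 _ _ b1), integral_finsetSum _ (fun i _ => i2 _ _ b1)]
  rw [byparts_dir volume hφ hψ b2 hs]
  congr 1
  exact Finset.sum_congr rfl fun i _ => byparts_dir volume hφ hψ b1 hs _

/-! ### the kernel variable -/

/-- hyperbolic cosine of the distance -/
noncomputable def cc {n : ℕ} (p q : HH n) : ℝ :=
  cosh (p.2 - q.2) + ‖p.1 - q.1‖ ^ 2 * exp (-(p.2 + q.2)) / 2

lemma cc_symm {n : ℕ} (p q : HH n) : cc p q = cc q p := by
  unfold cc
  rw [norm_sub_rev, ← cosh_neg, neg_sub, add_comm p.2]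

lemma cc_ge_one {n : ℕ} (p q : HH n) : 1 ≤ cc p q := by
  unfold cc
  have := one_le_cosh (p.2 - q.2)
  have : 0 ≤ ‖p.1 - q.1‖ ^ 2 * exp (-(p.2 + q.2)) / 2 := by positivity
  linarith

lemma cc_contDiff {n : ℕ} {m : WithTop ℕ∞} : ContDiff ℝ m (fun x : HH n × HH n => cc x.1 x.2) := by
  unfold cc
  have : ContDiff ℝ m (fun x : HH n × HH n => ‖x.1.1 - x.2.1‖ ^ 2) :=
    ContDiff.norm_sq ℝ (by fun_prop)
  fun_prop

lemma cc_contDiff' {n : ℕ} {m : WithTop ℕ∞} (p : HH n) : ContDiff ℝ m (cc p) :=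
  (cc_contDiff (n := n)).comp (contDiff_const.prodMk contDiff_id)

lemma pdvX_cc {n : ℕ} (p q : HH n) (i : Fin n) :
    pdv (dirX i) (cc p) q = -((p.1 i - q.1 i) * exp (-(p.2 + q.2))) := by
  apply pdv_eq ((cc_contDiff' (m := 1) p).differentiable (by norm_num) q)
  have h0 : ∀ t : ℝ, ‖p.1 - (q.1 + t • EuclideanSpace.single i (1:ℝ))‖ ^ 2
      = ‖p.1 - q.1‖ ^ 2 - 2 * t * (p.1 i - q.1 i) + t ^ 2 := by
    intro t
    rw [← sub_sub, @norm_sub_sq ℝ, norm_smul, inner_smul_right, EuclideanSpace.inner_single_right]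
    simp
    ring
  simp only [cc, dirX, Prod.fst_add, Prod.snd_add, Prod.smul_fst, Prod.smul_snd, smul_zero, add_zero, h0]
  have h1 : HasDerivAt (fun t : ℝ => ‖p.1 - q.1‖ ^ 2 - 2 * t * (p.1 i - q.1 i) + t ^ 2)
      (0 - 2 * 1 * (p.1 i - q.1 i) + 2 * 0 ^ 1 * 1) 0 := by
    have := ((((hasDerivAt_id (0:ℝ)).const_mul 2).mul_const (p.1 i - q.1 i)).const_sub (‖p.1 - q.1‖ ^ 2)).fun_add ((hasDerivAt_id' (0:ℝ)).fun_pow 2)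
    simpa using this
  have h2 := ((h1.mul_const (exp (-(p.2 + q.2)))).div_const 2).const_add (cosh (p.2 - q.2))
  refine h2.congr_deriv ?_
  ring

lemma pdvXX_cc {n : ℕ} (p q : HH n) (i : Fin n) :
    pdv (dirX i) (pdv (dirX i) (cc p)) q = exp (-(p.2 + q.2)) := by
  apply pdv_eq ((pdv_contDiff1 (cc_contDiff' p) _).differentiable (by norm_num) q)
  simp only [pdvX_cc]
  have h1 : HasDerivAt (fun t : ℝ => -((p.1 i - (q.1 i + t)) * exp (-(p.2 + q.2)))) (-(-1 * exp (-(p.2 + q.2)))) 0 := by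
    have := ((((hasDerivAt_id (0:ℝ)).const_add (q.1 i)).const_sub (p.1 i)).mul_const (exp (-(p.2 + q.2)))).fun_neg
    simpa using this
  simp only [dirX, Prod.fst_add, Prod.snd_add, Prod.smul_fst, Prod.smul_snd, smul_zero, add_zero]
  simpa using h1

lemma pdvS_cc {n : ℕ} (p q : HH n) :
    pdv (dirS n) (cc p) q = -(sinh (p.2 - q.2) + ‖p.1 - q.1‖ ^ 2 * exp (-(p.2 + q.2)) / 2) := by
  apply pdv_eq ((cc_contDiff' (m := 1) p).differentiable (by norm_num) q)
  simp only [cc, dirS, Prod.fst_add, Prod.snd_add, Prod.smul_fst, Prod.smul_snd, smul_zero, add_zero, smul_eq_mul, mul_one]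
  have a1 : HasDerivAt (fun t : ℝ => p.2 - (q.2 + t)) (-1) 0 := by
    simpa using ((hasDerivAt_id (0:ℝ)).const_add (q.2)).const_sub p.2
  have a2 : HasDerivAt (fun t : ℝ => -(p.2 + (q.2 + t))) (-1) 0 := by
    exact (((hasDerivAt_id' (0:ℝ)).const_add (q.2)).const_add p.2).fun_neg
  have h := a1.cosh.add (((a2.exp).const_mul (‖p.1 - q.1‖ ^ 2)).div_const 2)
  simp only [add_zero] at h
  refine h.congr_deriv ?_
  ring

lemma pdvSS_cc {n : ℕ} (p q : HH n) :
    pdv (dirS n) (pdv (dirS n) (cc p)) q = cc p q := by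
  apply pdv_eq ((pdv_contDiff1 (cc_contDiff' p) _).differentiable (by norm_num) q)
  simp only [pdvS_cc]
  simp only [cc, dirS, Prod.fst_add, Prod.snd_add, Prod.smul_fst, Prod.smul_snd, smul_zero, add_zero, smul_eq_mul, mul_one]
  have a1 : HasDerivAt (fun t : ℝ => p.2 - (q.2 + t)) (-1) 0 := by
    simpa using ((hasDerivAt_id (0:ℝ)).const_add (q.2)).const_sub p.2
  have a2 : HasDerivAt (fun t : ℝ => -(p.2 + (q.2 + t))) (-1) 0 := by
    exact (((hasDerivAt_id' (0:ℝ)).const_add (q.2)).const_add p.2).fun_neg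
  have h := (a1.sinh.add (((a2.exp).const_mul (‖p.1 - q.1‖ ^ 2)).div_const 2)).neg
  simp only [add_zero] at h
  refine h.congr_deriv ?_
  ring

/-- radial part -/
noncomputable def rlap (n : ℕ) (f : ℝ → ℝ) (a : ℝ) : ℝ :=
  (a ^ 2 - 1) * deriv (deriv f) a + (n + 1) * a * deriv f a

lemma pdv_comp {V : Type*} [NormedAddCommGroup V] [NormedSpace ℝ V] {f : ℝ → ℝ} {c : V → ℝ}
    (hf : Differentiable ℝ f) (hc : Differentiable ℝ c) (e q : V) :
    pdv e (fun q => f (c q)) q = deriv f (c q) * pdv e c q := by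
  unfold pdv
  have := ((hf (c q)).hasDerivAt.comp_hasFDerivAt q (hc q).hasFDerivAt).fderiv
  simp only [Function.comp_def] at this
  rw [this]; simp

lemma pdv2_comp {V : Type*} [NormedAddCommGroup V] [NormedSpace ℝ V] {f : ℝ → ℝ} {c : V → ℝ}
    (hf : ContDiff ℝ 2 f) (hc : ContDiff ℝ 2 c) (e q : V) :
    pdv e (pdv e (fun q => f (c q))) q = deriv (deriv f) (c q) * pdv e c q ^ 2 + deriv f (c q) * pdv e (pdv e c) q := by
  have h1 : pdv e (fun q => f (c q)) = fun q => deriv f (c q) * pdv e c q := by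
    ext q; exact pdv_comp (hf.differentiable (by norm_num)) (hc.differentiable (by norm_num)) e q
  have hf' : Differentiable ℝ (deriv f) := by
    have : ContDiff ℝ 1 (deriv f) := by
      have h2 : ContDiff ℝ (1+1) f := by simpa [one_add_one_eq_two] using hf
      exact (contDiff_succ_iff_deriv.1 h2).2.2
    exact this.differentiable (by norm_num)
  have hc1 : Differentiable ℝ c := hc.differentiable (by norm_num)
  rw [h1, pdv_mul (φ := fun q => deriv f (c q)) (hf'.comp hc1) ((pdv_contDiff1 hc e).differentiable (by norm_num)), pdv_comp hf' hc1]
  ring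

lemma slap_comp_cc {n : ℕ} {f : ℝ → ℝ} (hf : ContDiff ℝ 2 f) (p q : HH n) :
    slap n (fun q => f (cc p q)) q = rlap n f (cc p q) := by
  unfold slap rlap
  have hc := cc_contDiff' (m := 2) p
  rw [pdv2_comp hf hc, pdv_comp (hf.differentiable (by norm_num)) (hc.differentiable (by norm_num)), pdvSS_cc, pdvS_cc]
  simp only [pdv2_comp hf hc, pdvXX_cc, pdvX_cc]
  rw [Finset.sum_add_distrib, ← Finset.mul_sum]
  simp only [Finset.sum_const, Finset.card_univ, Fintype.card_fin, neg_sq, mul_pow, ← Finset.sum_mul, nsmul_eq_mul]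
  have hn : ∑ i : Fin n, (p.1 i - q.1 i) ^ 2 = ‖p.1 - q.1‖ ^ 2 := by
    rw [EuclideanSpace.norm_sq_eq]; simp
  rw [hn]
  set r := ‖p.1 - q.1‖ ^ 2
  have hcc : cc p q = cosh (p.2 - q.2) + r * exp (-(p.2 + q.2)) / 2 := rfl
  set c := cc p q
  set f1 := deriv f c
  set f2 := deriv (deriv f) c
  rw [hcc, cosh_eq, sinh_eq]
  have e1 : exp (-(p.2 + q.2)) = (exp p.2)⁻¹ * (exp q.2)⁻¹ := by rw [neg_add, exp_add, exp_neg, exp_neg]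
  have e2 : exp (p.2 - q.2) = exp p.2 * (exp q.2)⁻¹ := by rw [sub_eq_add_neg, exp_add, exp_neg]
  have e3 : exp (-(p.2 - q.2)) = (exp p.2)⁻¹ * exp q.2 := by rw [neg_sub, sub_eq_add_neg, exp_add, exp_neg, mul_comm]
  have e4 : exp (2 * q.2) = exp q.2 ^ 2 := by rw [← exp_nat_mul]; norm_num
  rw [e1, e2, e3, e4]
  have h1 := (exp_pos p.2).ne'
  have h2 := (exp_pos q.2).ne'
  field_simp
  ring

lemma cosh_lower (x : ℝ) : 1 + x ^ 2 / 2 ≤ cosh x := by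
  have h : cosh x = 1 + 2 * sinh (x / 2) ^ 2 := by
    have h1 := Real.cosh_two_mul (x / 2)
    have h2 := Real.cosh_sq (x / 2)
    rw [show 2 * (x / 2) = x by ring] at h1
    linarith
  have h2 : (x / 2) ^ 2 ≤ sinh (x / 2) ^ 2 := by
    rw [sq_le_sq]
    rw [Real.abs_sinh]
    exact Real.self_le_sinh_iff.2 (abs_nonneg _)
  rw [h]; linarith

lemma cc_bound {n : ℕ} (B R : ℝ) : ∃ B' : ℝ, ∀ p q : HH n, ‖p‖ ≤ B → cc p q ≤ R → ‖q‖ ≤ B' := by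
  refine ⟨B + R + 1 + 2 * R * exp (2 * B + R), fun p q hp hq => ?_⟩
  have hR : 1 ≤ R := (cc_ge_one p q).trans hq
  have hp1 : ‖p.1‖ ≤ B := (norm_fst_le p).trans hp
  have hp2 : |p.2| ≤ B := (norm_snd_le p).trans hp
  have hB : 0 ≤ B := (norm_nonneg p).trans hp
  unfold cc at hq
  have h1 := cosh_lower (p.2 - q.2)
  have h0 : 0 ≤ ‖p.1 - q.1‖ ^ 2 * exp (-(p.2 + q.2)) / 2 := by positivity
  have h2 : |p.2 - q.2| ≤ R := by
    have : |p.2 - q.2| ≤ 1 + (p.2 - q.2) ^ 2 / 2 := by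
      rw [← sq_abs]; nlinarith [sq_nonneg (|p.2 - q.2| - 1)]
    linarith
  have hpa := abs_le.1 hp2
  have h2a := abs_le.1 h2
  have hq2 : |q.2| ≤ B + R := by rw [abs_le]; constructor <;> linarith
  have hE : 0 < exp (2 * B + R) := exp_pos _
  have h3 : ‖p.1 - q.1‖ ^ 2 ≤ 2 * R * exp (2 * B + R) := by
    have h4 : ‖p.1 - q.1‖ ^ 2 * exp (-(p.2 + q.2)) ≤ 2 * R := by
      have := one_le_cosh (p.2 - q.2)
      linarith
    have h5 : exp (-(2 * B + R)) ≤ exp (-(p.2 + q.2)) := by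
      apply exp_le_exp.2; linarith
    have h6 : ‖p.1 - q.1‖ ^ 2 * exp (-(2 * B + R)) ≤ 2 * R :=
      (mul_le_mul_of_nonneg_left h5 (sq_nonneg _)).trans h4
    rw [exp_neg, ← div_eq_mul_inv, div_le_iff₀ hE] at h6
    exact h6
  have h7 : ‖p.1 - q.1‖ ≤ 1 + 2 * R * exp (2 * B + R) := by
    nlinarith [sq_nonneg (‖p.1 - q.1‖ - 1)]
  have h8 : ‖q.1‖ ≤ ‖p.1‖ + ‖p.1 - q.1‖ := by
    have := norm_sub_le p.1 (p.1 - q.1)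
    simpa using this
  rw [Prod.norm_def]
  have : 0 ≤ 2 * R * exp (2 * B + R) := by positivity
  apply max_le
  · linarith
  · rw [Real.norm_eq_abs]; linarith

lemma cc_lower {n : ℕ} (q : HH n) (h : cc 0 q ≤ 2) : ‖q‖ ^ 2 / 18 ≤ cc 0 q - 1 := by
  unfold cc at h ⊢
  simp only [Prod.fst_zero, Prod.snd_zero, zero_sub, norm_neg, cosh_neg, zero_add] at h ⊢
  have h1 := cosh_lower q.2
  have h0 : 0 ≤ ‖q.1‖ ^ 2 * exp (-q.2) / 2 := by positivity
  have h2 : q.2 ^ 2 ≤ 2 := by linarith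
  have h3 : q.2 ≤ 2 := by nlinarith
  have h4 : 1 / 9 ≤ exp (-q.2) := by
    have : exp (-2) ≤ exp (-q.2) := exp_le_exp.2 (by linarith)
    refine le_trans ?_ this
    rw [exp_neg, ← one_div]
    apply one_div_le_one_div_of_le (exp_pos _)
    have h5 : exp 2 = exp 1 ^ 2 := by rw [← exp_nat_mul]; norm_num
    have := Real.exp_one_lt_three
    rw [h5]
    nlinarith [exp_pos 1]
  have h5 : ‖q.1‖ ^ 2 / 18 ≤ ‖q.1‖ ^ 2 * exp (-q.2) / 2 := by
    nlinarith [mul_le_mul_of_nonneg_left h4 (sq_nonneg ‖q.1‖)]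
  rw [Prod.norm_def]
  rcases max_cases ‖q.1‖ ‖q.2‖ with ⟨h6, _⟩ | ⟨h6, _⟩
  · rw [h6]; nlinarith [sq_nonneg q.2]
  · rw [h6, Real.norm_eq_abs, sq_abs]; nlinarith [sq_nonneg q.2]

/-- left translation -/
noncomputable def act {n : ℕ} (p g : HH n) : HH n := (p.1 + exp p.2 • g.1, p.2 + g.2)

lemma cc_act {n : ℕ} (p g : HH n) : cc p (act p g) = cc 0 g := by
  unfold cc act
  simp only [sub_add_cancel_left, norm_neg, norm_smul, Real.norm_eq_abs, abs_exp, mul_pow, cosh_neg,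
    Prod.fst_zero, Prod.snd_zero, zero_sub, zero_add]
  congr 2
  rw [mul_comm (exp p.2 ^ 2), mul_assoc]
  congr 1
  rw [← exp_nat_mul, ← exp_add]
  congr 1; push_cast; ring

lemma act_zero {n : ℕ} (p : HH n) : act p 0 = p := by simp [act]

abbrev EE (n₁ n₂ : ℕ) := HH n₁ × HH n₂

instance haarEE (n₁ n₂ : ℕ) : (volume : Measure (EE n₁ n₂)).IsAddHaarMeasure :=
  Measure.prod.instIsAddHaarMeasure (volume : Measure (HH n₁)) (volume : Measure (HH n₂))

noncomputable def rho {n₁ n₂ : ℕ} (q : EE n₁ n₂) : ℝ := exp (-(n₁ * q.1.2)) * exp (-(n₂ * q.2.2))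

lemma rho_pos {n₁ n₂ : ℕ} (q : EE n₁ n₂) : 0 < rho q := by unfold rho; positivity

lemma rho_cont {n₁ n₂ : ℕ} : Continuous (rho (n₁ := n₁) (n₂ := n₂)) := by unfold rho; fun_prop

noncomputable def actE {n₁ n₂ : ℕ} (p g : EE n₁ n₂) : EE n₁ n₂ := (act p.1 g.1, act p.2 g.2)

lemma actE_zero {n₁ n₂ : ℕ} (p : EE n₁ n₂) : actE p 0 = p := by simp [actE, act_zero]

lemma actE_cont {n₁ n₂ : ℕ} : Continuous (fun x : EE n₁ n₂ × EE n₁ n₂ => actE x.1 x.2) := by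
  unfold actE act; fun_prop

noncomputable def scaleH (n : ℕ) (r : ℝ) (hr : r ≠ 0) : HH n ≃ₜ HH n :=
  (Homeomorph.smulOfNeZero r hr).prodCongr (Homeomorph.refl ℝ)

lemma map_scaleH (n : ℕ) (r : ℝ) (hr : r ≠ 0) :
    Measure.map (scaleH n r hr) volume = ENNReal.ofReal |(r ^ n)⁻¹| • (volume : Measure (HH n)) := by
  have h := Measure.map_prod_map (volume : Measure (EuclideanSpace ℝ (Fin n))) (volume : Measure ℝ)
    (f := fun x => r • x) (g := id) (by fun_prop) (by fun_prop)
  rw [Measure.map_addHaar_smul _ hr, Measure.map_id, Measure.prod_smul_left] at h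
  rw [finrank_euclideanSpace_fin] at h
  exact h.symm

lemma integral_actE {n₁ n₂ : ℕ} (p : EE n₁ n₂) (f : EE n₁ n₂ → ℝ) :
    ∫ g, f (actE p g) * rho g = ∫ q, f q * rho q := by
  have h1 : exp p.1.2 ≠ 0 := (exp_pos _).ne'
  have h2 : exp p.2.2 ≠ 0 := (exp_pos _).ne'
  let Φ : EE n₁ n₂ ≃ₜ EE n₁ n₂ := (scaleH n₁ _ h1).prodCongr (scaleH n₂ _ h2)
  have hΦ : Measure.map Φ volume = ENNReal.ofReal |(exp p.1.2 ^ n₁)⁻¹| • ENNReal.ofReal |(exp p.2.2 ^ n₂)⁻¹| • (volume : Measure (EE n₁ n₂)) := by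
    have h := Measure.map_prod_map (volume : Measure (HH n₁)) (volume : Measure (HH n₂))
      (scaleH n₁ _ h1).continuous.measurable (scaleH n₂ _ h2).continuous.measurable
    rw [map_scaleH, map_scaleH, Measure.prod_smul_left, Measure.prod_smul_right] at h
    exact h.symm
  have e1 : ∀ g, f (actE p g) * rho g = (fun q => f (p + q) * rho q) (Φ g) := by
    intro g
    rfl
  simp_rw [e1]
  have e2 : ∫ g, (fun q => f (p + q) * rho q) (Φ g) = ∫ q, (fun q => f (p + q) * rho q) q ∂(Measure.map Φ volume) :=
    (MeasurableEmbedding.integral_map (μ := (volume : Measure (EE n₁ n₂))) Φ.measurableEmbedding (fun q => f (p + q) * rho q)).symm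
  rw [e2, hΦ, integral_smul_measure, integral_smul_measure]
  have e3 : ∀ q, f (p + q) * rho q = (fun q => f q * rho q * (exp p.1.2 ^ n₁ * exp p.2.2 ^ n₂)) (p + q) := by
    intro q
    simp only [rho, Prod.fst_add, Prod.snd_add, mul_add, neg_add, exp_add, ← exp_nat_mul]
    have a1 := exp_neg (n₁ * p.1.2)
    have a2 := exp_neg (n₂ * p.2.2)
    rw [a1, a2]
    field_simp
  simp_rw [e3]
  rw [integral_add_left_eq_self (fun q => f q * rho q * (exp p.1.2 ^ n₁ * exp p.2.2 ^ n₂)), integral_mul_const]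
  have b1 : 0 < exp p.1.2 ^ n₁ := by positivity
  have b2 : 0 < exp p.2.2 ^ n₂ := by positivity
  rw [ENNReal.toReal_ofReal (abs_nonneg _), ENNReal.toReal_ofReal (abs_nonneg _), abs_of_pos (by positivity), abs_of_pos (by positivity)]
  simp only [smul_eq_mul]
  field_simp

section slices
variable {V W : Type*} [NormedAddCommGroup V] [NormedSpace ℝ V] [NormedAddCommGroup W] [NormedSpace ℝ W]

lemma slice_pdv1 {v : V × W → ℝ} (hv : Differentiable ℝ v) (e a : V) (b : W) :
    pdv e (fun a => v (a, b)) a = pdv ((e, 0) : V × W) v (a, b) := by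
  apply pdv_eq
  · have : Differentiable ℝ (fun a => v (a, b)) := by fun_prop
    exact this a
  · have := hasDerivAt_line hv (a, b) ((e, 0) : V × W) 0
    simpa using this

lemma slice_pdv2 {v : V × W → ℝ} (hv : Differentiable ℝ v) (e b : W) (a : V) :
    pdv e (fun b => v (a, b)) b = pdv ((0, e) : V × W) v (a, b) := by
  apply pdv_eq
  · have : Differentiable ℝ (fun b => v (a, b)) := by fun_prop
    exact this b
  · have := hasDerivAt_line hv (a, b) ((0, e) : V × W) 0
    simpa using this

lemma slice_pdv11 {v : V × W → ℝ} (hv : ContDiff ℝ 2 v) (e a : V) (b : W) :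
    pdv e (pdv e (fun a => v (a, b))) a = pdv ((e, 0) : V × W) (pdv ((e, 0) : V × W) v) (a, b) := by
  have h : pdv e (fun a => v (a, b)) = fun a => pdv ((e, 0) : V × W) v (a, b) := by
    ext a; exact slice_pdv1 (hv.differentiable (by norm_num)) e a b
  rw [h, slice_pdv1 ((pdv_contDiff1 hv _).differentiable (by norm_num))]

lemma slice_pdv22 {v : V × W → ℝ} (hv : ContDiff ℝ 2 v) (e b : W) (a : V) :
    pdv e (pdv e (fun b => v (a, b))) b = pdv ((0, e) : V × W) (pdv ((0, e) : V × W) v) (a, b) := by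
  have h : pdv e (fun b => v (a, b)) = fun b => pdv ((0, e) : V × W) v (a, b) := by
    ext b; exact slice_pdv2 (hv.differentiable (by norm_num)) e b a
  rw [h, slice_pdv2 ((pdv_contDiff1 hv _).differentiable (by norm_num))]
end slices

lemma deriv_eq_pdv (f : ℝ → ℝ) : deriv f = pdv (1:ℝ) f := by
  ext x; simp [pdv]

noncomputable def S1 {n₁ n₂ : ℕ} (v : EE n₁ n₂ → ℝ) (q : EE n₁ n₂) : ℝ := slap n₁ (fun a => v (a, q.2)) q.1
noncomputable def S2 {n₁ n₂ : ℕ} (v : EE n₁ n₂ → ℝ) (q : EE n₁ n₂) : ℝ := slap n₂ (fun b => v (q.1, b)) q.2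

lemma S1_cont {n₁ n₂ : ℕ} {v : EE n₁ n₂ → ℝ} (hv : ContDiff ℝ 2 v) : Continuous (S1 v) := by
  have h : S1 v = fun q : EE n₁ n₂ => exp (2 * q.1.2) * ∑ i : Fin n₁, pdv ((dirX i, 0) : EE n₁ n₂) (pdv ((dirX i, 0) : EE n₁ n₂) v) q
    + pdv ((dirS n₁, 0) : EE n₁ n₂) (pdv ((dirS n₁, 0) : EE n₁ n₂) v) q - n₁ * pdv ((dirS n₁, 0) : EE n₁ n₂) v q := by
    ext q
    simp only [S1, slap, slice_pdv11 hv, slice_pdv1 (hv.differentiable (by norm_num))]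
  rw [h]
  have h1 := fun e : EE n₁ n₂ => pdv_cont (pdv_contDiff1 hv e) e
  have h2 := fun e : EE n₁ n₂ => pdv_cont (hv.of_le (by norm_num)) e
  fun_prop

lemma S2_cont {n₁ n₂ : ℕ} {v : EE n₁ n₂ → ℝ} (hv : ContDiff ℝ 2 v) : Continuous (S2 v) := by
  have h : S2 v = fun q : EE n₁ n₂ => exp (2 * q.2.2) * ∑ i : Fin n₂, pdv ((0, dirX i) : EE n₁ n₂) (pdv ((0, dirX i) : EE n₁ n₂) v) q
    + pdv ((0, dirS n₂) : EE n₁ n₂) (pdv ((0, dirS n₂) : EE n₁ n₂) v) q - n₂ * pdv ((0, dirS n₂) : EE n₁ n₂) v q := by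
    ext q
    simp only [S2, slap, slice_pdv22 hv, slice_pdv2 (hv.differentiable (by norm_num))]
  rw [h]
  have h1 := fun e : EE n₁ n₂ => pdv_cont (pdv_contDiff1 hv e) e
  have h2 := fun e : EE n₁ n₂ => pdv_cont (hv.of_le (by norm_num)) e
  fun_prop

noncomputable def L1 (n : ℕ) (F : ℝ × ℝ → ℝ) (x : ℝ × ℝ) : ℝ :=
  (x.1 ^ 2 - 1) * pdv ((1, 0) : ℝ × ℝ) (pdv ((1, 0) : ℝ × ℝ) F) x + (n + 1) * x.1 * pdv ((1, 0) : ℝ × ℝ) F x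
noncomputable def L2 (n : ℕ) (F : ℝ × ℝ → ℝ) (x : ℝ × ℝ) : ℝ :=
  (x.2 ^ 2 - 1) * pdv ((0, 1) : ℝ × ℝ) (pdv ((0, 1) : ℝ × ℝ) F) x + (n + 1) * x.2 * pdv ((0, 1) : ℝ × ℝ) F x

lemma rlap_slice1 (n : ℕ) {F : ℝ × ℝ → ℝ} (hF : ContDiff ℝ 2 F) (a b : ℝ) :
    rlap n (fun a => F (a, b)) a = L1 n F (a, b) := by
  simp only [rlap, L1, deriv_eq_pdv, slice_pdv11 hF, slice_pdv1 (hF.differentiable (by norm_num))]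
lemma rlap_slice2 (n : ℕ) {F : ℝ × ℝ → ℝ} (hF : ContDiff ℝ 2 F) (a b : ℝ) :
    rlap n (fun b => F (a, b)) b = L2 n F (a, b) := by
  simp only [rlap, L2, deriv_eq_pdv, slice_pdv22 hF, slice_pdv2 (hF.differentiable (by norm_num))]

lemma L1_contDiff (n : ℕ) {m : WithTop ℕ∞} {F : ℝ × ℝ → ℝ} (hF : ContDiff ℝ (m + 1 + 1) F) : ContDiff ℝ m (L1 n F) := by
  have h1 : ContDiff ℝ (m+1) (pdv ((1, 0) : ℝ × ℝ) F) := pdv_contDiff hF _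
  have h2 : ContDiff ℝ m (pdv ((1, 0) : ℝ × ℝ) (pdv ((1, 0) : ℝ × ℝ) F)) := pdv_contDiff h1 _
  have h3 := h1.of_le (m := m) le_self_add
  unfold L1; fun_prop
lemma L2_contDiff (n : ℕ) {m : WithTop ℕ∞} {F : ℝ × ℝ → ℝ} (hF : ContDiff ℝ (m + 1 + 1) F) : ContDiff ℝ m (L2 n F) := by
  have h1 : ContDiff ℝ (m+1) (pdv ((0, 1) : ℝ × ℝ) F) := pdv_contDiff hF _
  have h2 : ContDiff ℝ m (pdv ((0, 1) : ℝ × ℝ) (pdv ((0, 1) : ℝ × ℝ) F)) := pdv_contDiff h1 _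
  have h3 := h1.of_le (m := m) le_self_add
  unfold L2; fun_prop
lemma L1_cont (n : ℕ) {F : ℝ × ℝ → ℝ} (hF : ContDiff ℝ 2 F) : Continuous (L1 n F) :=
  (L1_contDiff (m := 0) n (by simpa [one_add_one_eq_two] using hF)).continuous
lemma L2_cont (n : ℕ) {F : ℝ × ℝ → ℝ} (hF : ContDiff ℝ 2 F) : Continuous (L2 n F) :=
  (L2_contDiff (m := 0) n (by simpa [one_add_one_eq_two] using hF)).continuous

/-- vanishing for large arguments -/
def Van (F : ℝ × ℝ → ℝ) : Prop := ∃ R : ℝ, ∀ x : ℝ × ℝ, R < x.1 + x.2 → F x = 0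

lemma Van.pdv {F : ℝ × ℝ → ℝ} (h : Van F) (e : ℝ × ℝ) : Van (pdv e F) := by
  obtain ⟨R, hR⟩ := h
  refine ⟨R, fun x hx => ?_⟩
  have : F =ᶠ[𝓝 x] fun _ => 0 := by
    have ho : IsOpen {x : ℝ × ℝ | R < x.1 + x.2} := isOpen_lt (by fun_prop) (by fun_prop)
    filter_upwards [ho.mem_nhds hx] with y hy using hR y hy
  unfold _root_.pdv
  rw [this.fderiv_eq]; simp

lemma Van.L1 (n : ℕ) {F : ℝ × ℝ → ℝ} (h : Van F) : Van (L1 n F) := by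
  obtain ⟨R, hR⟩ := h.pdv (1, 0)
  obtain ⟨R', hR'⟩ := (h.pdv (1, 0)).pdv (1, 0)
  refine ⟨max R R', fun x hx => ?_⟩
  unfold _root_.L1
  rw [hR x ((le_max_left _ _).trans_lt hx), hR' x ((le_max_right _ _).trans_lt hx)]; ring
lemma Van.L2 (n : ℕ) {F : ℝ × ℝ → ℝ} (h : Van F) : Van (L2 n F) := by
  obtain ⟨R, hR⟩ := h.pdv (0, 1)
  obtain ⟨R', hR'⟩ := (h.pdv (0, 1)).pdv (0, 1)
  refine ⟨max R R', fun x hx => ?_⟩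
  unfold _root_.L2
  rw [hR x ((le_max_left _ _).trans_lt hx), hR' x ((le_max_right _ _).trans_lt hx)]; ring
lemma Van.add {F G : ℝ × ℝ → ℝ} (h : Van F) (h' : Van G) : Van (fun x => F x + G x) := by
  obtain ⟨R, hR⟩ := h
  obtain ⟨R', hR'⟩ := h'
  refine ⟨max R R', fun x hx => ?_⟩
  simp [hR x ((le_max_left _ _).trans_lt hx), hR' x ((le_max_right _ _).trans_lt hx)]
lemma Van.mul_left {F : ℝ × ℝ → ℝ} (c : ℝ) (h : Van F) : Van (fun x => c * F x) := by
  obtain ⟨R, hR⟩ := h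
  exact ⟨R, fun x hx => by simp [hR x hx]⟩

/-- point-pair kernel -/
noncomputable def Ker {n₁ n₂ : ℕ} (F : ℝ × ℝ → ℝ) (p q : EE n₁ n₂) : ℝ := F (cc p.1 q.1, cc p.2 q.2)

lemma Ker_symm {n₁ n₂ : ℕ} (F : ℝ × ℝ → ℝ) (p q : EE n₁ n₂) : Ker F p q = Ker F q p := by
  unfold Ker; rw [cc_symm p.1, cc_symm p.2]

lemma ccE_contDiff {n₁ n₂ : ℕ} {m : WithTop ℕ∞} :
    ContDiff ℝ m (fun x : EE n₁ n₂ × EE n₁ n₂ => (cc x.1.1 x.2.1, cc x.1.2 x.2.2)) := by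
  have h1 : ContDiff ℝ m (fun x : EE n₁ n₂ × EE n₁ n₂ => cc x.1.1 x.2.1) :=
    (cc_contDiff (n := n₁)).comp (by fun_prop : ContDiff ℝ m (fun x : EE n₁ n₂ × EE n₁ n₂ => (x.1.1, x.2.1)))
  have h2 : ContDiff ℝ m (fun x : EE n₁ n₂ × EE n₁ n₂ => cc x.1.2 x.2.2) :=
    (cc_contDiff (n := n₂)).comp (by fun_prop : ContDiff ℝ m (fun x : EE n₁ n₂ × EE n₁ n₂ => (x.1.2, x.2.2)))
  exact h1.prodMk h2

lemma Ker_cont2 {n₁ n₂ : ℕ} {F : ℝ × ℝ → ℝ} (hF : Continuous F) :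
    Continuous (fun x : EE n₁ n₂ × EE n₁ n₂ => Ker F x.1 x.2) :=
  hF.comp (ccE_contDiff (m := 0)).continuous

lemma Ker_cont {n₁ n₂ : ℕ} {F : ℝ × ℝ → ℝ} (hF : Continuous F) (p : EE n₁ n₂) : Continuous (Ker F p) :=
  (Ker_cont2 hF).comp (by fun_prop : Continuous (fun q => (p, q)))

lemma Ker_contDiff {n₁ n₂ : ℕ} {m : WithTop ℕ∞} {F : ℝ × ℝ → ℝ} (hF : ContDiff ℝ m F) (p : EE n₁ n₂) : ContDiff ℝ m (Ker F p) :=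
  (hF.comp ccE_contDiff).comp (by fun_prop : ContDiff ℝ m (fun q => (p, q)))

lemma Ker_bound {n₁ n₂ : ℕ} {F : ℝ × ℝ → ℝ} (hF : Van F) (B : ℝ) :
    ∃ B' : ℝ, ∀ p q : EE n₁ n₂, ‖p‖ ≤ B → B' < ‖q‖ → Ker F p q = 0 := by
  obtain ⟨R, hR⟩ := hF
  obtain ⟨B1, h1⟩ := cc_bound (n := n₁) B R
  obtain ⟨B2, h2⟩ := cc_bound (n := n₂) B R
  refine ⟨max B1 B2, fun p q hp hq => ?_⟩
  apply hR
  by_contra hcon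
  push Not at hcon
  simp only at hcon
  have a1 := cc_ge_one p.1 q.1
  have a2 := cc_ge_one p.2 q.2
  have b1 := h1 p.1 q.1 ((norm_fst_le p).trans hp) (by linarith)
  have b2 := h2 p.2 q.2 ((norm_snd_le p).trans hp) (by linarith)
  have : ‖q‖ ≤ max B1 B2 := by
    rw [Prod.norm_def]; exact max_le_max b1 b2
  linarith

lemma supp_of_bound {V : Type*} [NormedAddCommGroup V] [NormedSpace ℝ V] [FiniteDimensional ℝ V] {f : V → ℝ} (B : ℝ)
    (h : ∀ q, B < ‖q‖ → f q = 0) : HasCompactSupport f := by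
  haveI : ProperSpace V := FiniteDimensional.proper ℝ V
  apply HasCompactSupport.intro (isCompact_closedBall (0:V) B)
  intro x hx
  apply h
  simpa using hx

lemma Ker_supp {n₁ n₂ : ℕ} {F : ℝ × ℝ → ℝ} (hF : Van F) (p : EE n₁ n₂) : HasCompactSupport (Ker F p) := by
  obtain ⟨B, hB⟩ := Ker_bound (n₁ := n₁) (n₂ := n₂) hF ‖p‖
  exact supp_of_bound B (fun q hq => hB p q le_rfl hq)

/-- kernel operator -/
noncomputable def TT {n₁ n₂ : ℕ} (F : ℝ × ℝ → ℝ) (w : EE n₁ n₂ → ℝ) (p : EE n₁ n₂) : ℝ :=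
  ∫ q, Ker F p q * w q * rho q

lemma TT_integrable {n₁ n₂ : ℕ} {F : ℝ × ℝ → ℝ} (hF : Continuous F) (hV : Van F) {w : EE n₁ n₂ → ℝ} (hw : Continuous w)
    (p : EE n₁ n₂) : Integrable (fun q => Ker F p q * w q * rho q) := by
  apply Continuous.integrable_of_hasCompactSupport
  · exact ((Ker_cont hF p).mul hw).mul rho_cont
  · exact ((Ker_supp hV p).mul_right).mul_right

lemma TT_translate {n₁ n₂ : ℕ} (F : ℝ × ℝ → ℝ) (w : EE n₁ n₂ → ℝ) (p : EE n₁ n₂) :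
    TT F w p = ∫ g, Ker F 0 g * w (actE p g) * rho g := by
  unfold TT
  rw [← integral_actE p]
  congr 1; ext g
  simp only [Ker, actE, cc_act]
  rfl

lemma TT_cont {n₁ n₂ : ℕ} {F : ℝ × ℝ → ℝ} (hF : Continuous F) (hV : Van F) {w : EE n₁ n₂ → ℝ} (hw : Continuous w) :
    Continuous (TT F w) := by
  have h : TT F w = fun p => ∫ g, Ker F 0 g * w (actE p g) * rho g := by ext p; exact TT_translate F w p
  rw [h]
  obtain ⟨B, hB⟩ := Ker_bound (n₁ := n₁) (n₂ := n₂) hV 0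
  have h2 : ∀ p : EE n₁ n₂, ∫ g, Ker F 0 g * w (actE p g) * rho g = ∫ g in Metric.closedBall 0 B, Ker F 0 g * w (actE p g) * rho g := by
    intro p
    symm
    apply setIntegral_eq_integral_of_forall_compl_eq_zero
    intro x hx
    rw [hB 0 x (by simp) (by simpa using hx)]; ring
  simp_rw [h2]
  apply continuous_parametric_integral_of_continuous
  · have := (hw.comp (actE_cont (n₁ := n₁) (n₂ := n₂)))
    exact (((Ker_cont hF 0).comp continuous_snd).mul this).mul (rho_cont.comp continuous_snd)
  · exact isCompact_closedBall 0 B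

lemma TT_add_w {n₁ n₂ : ℕ} {F : ℝ × ℝ → ℝ} (hF : Continuous F) (hV : Van F) {w w' : EE n₁ n₂ → ℝ} (hw : Continuous w)
    (hw' : Continuous w') (p : EE n₁ n₂) : TT F (fun q => w q + w' q) p = TT F w p + TT F w' p := by
  unfold TT
  rw [← integral_add (TT_integrable hF hV hw p) (TT_integrable hF hV hw' p)]
  congr 1; ext q; ring

lemma TT_smul_w {n₁ n₂ : ℕ} (F : ℝ × ℝ → ℝ) (w : EE n₁ n₂ → ℝ) (c : ℝ)
    (p : EE n₁ n₂) : TT F (fun q => c * w q) p = c * TT F w p := by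
  unfold TT
  rw [← integral_const_mul]
  congr 1; ext q; ring

lemma TT_add_F {n₁ n₂ : ℕ} {F G : ℝ × ℝ → ℝ} (hF : Continuous F) (hV : Van F) (hG : Continuous G) (hVG : Van G)
    {w : EE n₁ n₂ → ℝ} (hw : Continuous w)
    (p : EE n₁ n₂) : TT (fun x => F x + G x) w p = TT F w p + TT G w p := by
  unfold TT
  rw [← integral_add (TT_integrable hF hV hw p) (TT_integrable hG hVG hw p)]
  congr 1; ext q; simp only [Ker]; ring

lemma TT_smul_F {n₁ n₂ : ℕ} (F : ℝ × ℝ → ℝ) (w : EE n₁ n₂ → ℝ) (c : ℝ)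
    (p : EE n₁ n₂) : TT (fun x => c * F x) w p = c * TT F w p := by
  unfold TT
  rw [← integral_const_mul]
  congr 1; ext q; simp only [Ker]; ring

lemma fst_supp {V W : Type*} [NormedAddCommGroup V] [NormedSpace ℝ V] [FiniteDimensional ℝ V] [NormedAddCommGroup W]
    {f : V × W → ℝ} {B : ℝ} (h : ∀ q, B < ‖q‖ → f q = 0) (b : W) : HasCompactSupport (fun a => f (a, b)) :=
  supp_of_bound B (fun q hq => h _ (hq.trans_le (norm_fst_le (q, b))))
lemma snd_supp {V W : Type*} [NormedAddCommGroup V] [NormedAddCommGroup W] [NormedSpace ℝ W] [FiniteDimensional ℝ W]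
    {f : V × W → ℝ} {B : ℝ} (h : ∀ q, B < ‖q‖ → f q = 0) (a : V) : HasCompactSupport (fun b => f (a, b)) :=
  supp_of_bound B (fun q hq => h _ (hq.trans_le (norm_snd_le (a, q))))

lemma S1_Ker {n₁ n₂ : ℕ} {F : ℝ × ℝ → ℝ} (hF : ContDiff ℝ 2 F) (p q : EE n₁ n₂) :
    S1 (Ker F p) q = Ker (L1 n₁ F) p q := by
  unfold S1 Ker
  rw [slap_comp_cc (f := fun a => F (a, cc p.2 q.2)) (by fun_prop), rlap_slice1 _ hF]
lemma S2_Ker {n₁ n₂ : ℕ} {F : ℝ × ℝ → ℝ} (hF : ContDiff ℝ 2 F) (p q : EE n₁ n₂) :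
    S2 (Ker F p) q = Ker (L2 n₂ F) p q := by
  unfold S2 Ker
  rw [slap_comp_cc (f := fun b => F (cc p.1 q.1, b)) (by fun_prop), rlap_slice2 _ hF]

lemma TT_L1 {n₁ n₂ : ℕ} {F : ℝ × ℝ → ℝ} (hF : ContDiff ℝ 2 F) (hV : Van F) {v : EE n₁ n₂ → ℝ} (hv : ContDiff ℝ 2 v)
    (p : EE n₁ n₂) : TT (L1 n₁ F) v p = TT F (S1 v) p := by
  have i1 := TT_integrable (L1_cont n₁ hF) (hV.L1 n₁) hv.continuous p
  have i2 := TT_integrable hF.continuous hV (S1_cont hv) p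
  unfold TT
  obtain ⟨B, hB⟩ := Ker_bound (n₁ := n₁) (n₂ := n₂) hV ‖p‖
  rw [Measure.volume_eq_prod] at i1 i2 ⊢
  rw [integral_prod_symm _ i1, integral_prod_symm _ i2]
  congr 1; ext b
  have h := byparts (n := n₁) (φ := fun a => Ker F p (a, b)) (ψ := fun a => v (a, b))
    ((Ker_contDiff hF p).comp (by fun_prop)) (hv.comp (by fun_prop)) (fst_supp (hB p · le_rfl) b)
  have h1 : ∀ a, Ker (L1 n₁ F) p (a, b) * v (a, b) * rho (a, b) =
      exp (-(n₂ * b.2)) * (slap n₁ (fun a => Ker F p (a, b)) a * v (a, b) * exp (-(n₁ * a.2))) := by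
    intro a
    rw [← S1_Ker hF]; simp only [S1, rho]; ring
  have h2 : ∀ a, Ker F p (a, b) * S1 v (a, b) * rho (a, b) =
      exp (-(n₂ * b.2)) * (Ker F p (a, b) * slap n₁ (fun a => v (a, b)) a * exp (-(n₁ * a.2))) := by
    intro a
    simp only [S1, rho]; ring
  simp_rw [h1, h2, integral_const_mul, h]

lemma TT_L2 {n₁ n₂ : ℕ} {F : ℝ × ℝ → ℝ} (hF : ContDiff ℝ 2 F) (hV : Van F) {v : EE n₁ n₂ → ℝ} (hv : ContDiff ℝ 2 v)
    (p : EE n₁ n₂) : TT (L2 n₂ F) v p = TT F (S2 v) p := by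
  have i1 := TT_integrable (L2_cont n₂ hF) (hV.L2 n₂) hv.continuous p
  have i2 := TT_integrable hF.continuous hV (S2_cont hv) p
  unfold TT
  obtain ⟨B, hB⟩ := Ker_bound (n₁ := n₁) (n₂ := n₂) hV ‖p‖
  rw [Measure.volume_eq_prod] at i1 i2 ⊢
  rw [integral_prod _ i1, integral_prod _ i2]
  congr 1; ext a
  have h := byparts (n := n₂) (φ := fun b => Ker F p (a, b)) (ψ := fun b => v (a, b))
    ((Ker_contDiff hF p).comp (by fun_prop)) (hv.comp (by fun_prop)) (snd_supp (hB p · le_rfl) a)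
  have h1 : ∀ b, Ker (L2 n₂ F) p (a, b) * v (a, b) * rho (a, b) =
      exp (-(n₁ * a.2)) * (slap n₂ (fun b => Ker F p (a, b)) b * v (a, b) * exp (-(n₂ * b.2))) := by
    intro b
    rw [← S2_Ker hF]; simp only [S2, rho]; ring
  have h2 : ∀ b, Ker F p (a, b) * S2 v (a, b) * rho (a, b) =
      exp (-(n₁ * a.2)) * (Ker F p (a, b) * slap n₂ (fun b => v (a, b)) b * exp (-(n₂ * b.2))) := by
    intro b
    simp only [S2, rho]; ring
  simp_rw [h1, h2, integral_const_mul, h]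

lemma TT_TT {n₁ n₂ : ℕ} {A D : ℝ × ℝ → ℝ} (hA : Continuous A) (hVA : Van A) (hD : Continuous D) (hVD : Van D)
    {w : EE n₁ n₂ → ℝ} (hw : Continuous w) (p : EE n₁ n₂) :
    TT A (TT D w) p = ∫ r, TT A (Ker D r) p * w r * rho r := by
  obtain ⟨B1, h1⟩ := Ker_bound (n₁ := n₁) (n₂ := n₂) hVA ‖p‖
  obtain ⟨B2, h2⟩ := Ker_bound (n₁ := n₁) (n₂ := n₂) hVD B1
  have hsw := integral_integral_swap_of_hasCompactSupport (μ := (volume : Measure (EE n₁ n₂))) (ν := (volume : Measure (EE n₁ n₂)))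
    (f := fun q r => Ker A p q * rho q * (Ker D q r * w r * rho r)) ?_ ?_
  · have e1 : TT A (TT D w) p = ∫ q, ∫ r, Ker A p q * rho q * (Ker D q r * w r * rho r) := by
      unfold TT
      congr 1; ext q
      rw [integral_const_mul]; ring
    rw [e1, hsw]
    congr 1; ext r
    unfold TT
    rw [mul_assoc, ← integral_mul_const]
    congr 1; ext q
    rw [Ker_symm D q r]; ring
  · have k1 : Continuous fun x : EE n₁ n₂ × EE n₁ n₂ => Ker A p x.1 := (Ker_cont hA p).comp continuous_fst
    have k2 : Continuous fun x : EE n₁ n₂ × EE n₁ n₂ => rho x.1 := rho_cont.comp continuous_fst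
    have k3 : Continuous fun x : EE n₁ n₂ × EE n₁ n₂ => rho x.2 := rho_cont.comp continuous_snd
    have k4 : Continuous fun x : EE n₁ n₂ × EE n₁ n₂ => w x.2 := hw.comp continuous_snd
    exact (k1.mul k2).mul (((Ker_cont2 hD).mul k4).mul k3)
  · apply supp_of_bound (max B1 B2)
    intro x hx
    by_cases hx1 : B1 < ‖x.1‖
    · simp [Function.uncurry, h1 p x.1 le_rfl hx1]
    · have : B2 < ‖x.2‖ := by
        rw [Prod.norm_def] at hx
        push Not at hx1
        by_contra hc
        push Not at hc
        exact absurd hx (not_lt.2 (max_le_max hx1 hc))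
      simp [Function.uncurry, h2 x.1 x.2 (not_lt.1 hx1) this]

lemma S1_KerF {n₁ n₂ : ℕ} {F : ℝ × ℝ → ℝ} (hF : ContDiff ℝ 2 F) (p : EE n₁ n₂) :
    S1 (Ker F p) = Ker (L1 n₁ F) p := funext (S1_Ker hF p)
lemma S2_KerF {n₁ n₂ : ℕ} {F : ℝ × ℝ → ℝ} (hF : ContDiff ℝ 2 F) (p : EE n₁ n₂) :
    S2 (Ker F p) = Ker (L2 n₂ F) p := funext (S2_Ker hF p)

lemma comm1 {n₁ n₂ : ℕ} {G D : ℝ × ℝ → ℝ} (hG : ContDiff ℝ 2 G) (hVG : Van G) (hD : ContDiff ℝ 2 D) (hVD : Van D)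
    {w : EE n₁ n₂ → ℝ} (hw : Continuous w) (p : EE n₁ n₂) :
    TT (L1 n₁ G) (TT D w) p = TT G (TT (L1 n₁ D) w) p := by
  rw [TT_TT (L1_cont n₁ hG) (hVG.L1 n₁) hD.continuous hVD hw, TT_TT hG.continuous hVG (L1_cont n₁ hD) (hVD.L1 n₁) hw]
  simp_rw [← S1_KerF hD, TT_L1 hG hVG (Ker_contDiff hD _)]
lemma comm2 {n₁ n₂ : ℕ} {G D : ℝ × ℝ → ℝ} (hG : ContDiff ℝ 2 G) (hVG : Van G) (hD : ContDiff ℝ 2 D) (hVD : Van D)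
    {w : EE n₁ n₂ → ℝ} (hw : Continuous w) (p : EE n₁ n₂) :
    TT (L2 n₂ G) (TT D w) p = TT G (TT (L2 n₂ D) w) p := by
  rw [TT_TT (L2_cont n₂ hG) (hVG.L2 n₂) hD.continuous hVD hw, TT_TT hG.continuous hVG (L2_cont n₂ hD) (hVD.L2 n₂) hw]
  simp_rw [← S2_KerF hD, TT_L2 hG hVG (Ker_contDiff hD _)]

noncomputable def LL (n₁ n₂ : ℕ) (μ : ℝ) (F : ℝ × ℝ → ℝ) (x : ℝ × ℝ) : ℝ := L1 n₁ F x + L2 n₂ F x + μ * F x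

lemma TT_LL {n₁ n₂ : ℕ} (μ : ℝ) {F : ℝ × ℝ → ℝ} (hF : ContDiff ℝ 2 F) (hV : Van F) {w : EE n₁ n₂ → ℝ} (hw : Continuous w)
    (p : EE n₁ n₂) : TT (LL n₁ n₂ μ F) w p = TT (L1 n₁ F) w p + TT (L2 n₂ F) w p + μ * TT F w p := by
  have h1 := L1_cont n₁ hF
  have h2 := L2_cont n₂ hF
  have h3 := hF.continuous
  unfold LL
  rw [TT_add_F (F := fun x => L1 n₁ F x + L2 n₂ F x) (G := fun x => μ * F x) (h1.add h2) ((hV.L1 n₁).add (hV.L2 n₂))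
    (continuous_const.mul h3) (hV.mul_left μ) hw, TT_add_F h1 (hV.L1 n₁) h2 (hV.L2 n₂) hw, TT_smul_F]

/-- continuous weak solutions -/
def CC (n₁ n₂ : ℕ) (μ : ℝ) : Submodule ℝ (EE n₁ n₂ → ℝ) where
  carrier := {w | Continuous w ∧ ∀ F, ContDiff ℝ 2 F → Van F → ∀ p, TT (LL n₁ n₂ μ F) w p = 0}
  zero_mem' := ⟨continuous_const, fun F _ _ p => by simp [TT]⟩
  add_mem' := by
    rintro w w' ⟨hw, h⟩ ⟨hw', h'⟩
    refine ⟨hw.add hw', fun F hF hV p => ?_⟩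
    have := TT_LL μ hF hV (hw.add hw') p
    have e1 := h F hF hV p
    have e2 := h' F hF hV p
    rw [TT_LL μ hF hV hw] at e1
    rw [TT_LL μ hF hV hw'] at e2
    have a1 := TT_add_w (L1_cont n₁ hF) (hV.L1 n₁) hw hw' p
    have a2 := TT_add_w (L2_cont n₂ hF) (hV.L2 n₂) hw hw' p
    have a3 := TT_add_w hF.continuous hV hw hw' p
    rw [this]
    change TT (L1 n₁ F) (w + w') p = _ at a1
    change TT (L2 n₂ F) (w + w') p = _ at a2
    change TT F (w + w') p = _ at a3
    rw [a1, a2, a3]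
    linear_combination e1 + e2
  smul_mem' := by
    rintro c w ⟨hw, h⟩
    refine ⟨hw.const_smul c, fun F hF hV p => ?_⟩
    have := TT_smul_w (LL n₁ n₂ μ F) w c p
    rw [h F hF hV p, mul_zero] at this
    exact this

lemma mem_CC_of_sol {n₁ n₂ : ℕ} {μ : ℝ} {v : EE n₁ n₂ → ℝ} (hv : ContDiff ℝ 2 v)
    (h : ∀ q, S1 v q + S2 v q + μ * v q = 0) : v ∈ CC n₁ n₂ μ := by
  refine ⟨hv.continuous, fun F hF hV p => ?_⟩
  rw [TT_LL μ hF hV hv.continuous, TT_L1 hF hV hv, TT_L2 hF hV hv, ← TT_smul_w,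
    ← TT_add_w hF.continuous hV (S1_cont hv) (S2_cont hv),
    ← TT_add_w (w := fun q => S1 v q + S2 v q) (w' := fun q => μ * v q) hF.continuous hV ((S1_cont hv).add (S2_cont hv)) (continuous_const.mul hv.continuous)]
  simp [h, TT]

lemma TT_mem_CC {n₁ n₂ : ℕ} {μ : ℝ} {w : EE n₁ n₂ → ℝ} (hw : w ∈ CC n₁ n₂ μ) {d : ℝ × ℝ → ℝ} (hd : ContDiff ℝ 2 d) (hVd : Van d) :
    TT d w ∈ CC n₁ n₂ μ := by
  have hc := hw.1
  refine ⟨TT_cont hd.continuous hVd hc, fun F hF hV p => ?_⟩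
  rw [TT_LL μ hF hV (TT_cont hd.continuous hVd hc), comm1 hF hV hd hVd hc, comm2 hF hV hd hVd hc, ← TT_smul_w,
    ← TT_add_w hF.continuous hV (TT_cont (L1_cont n₁ hd) (hVd.L1 n₁) hc) (TT_cont (L2_cont n₂ hd) (hVd.L2 n₂) hc),
    ← TT_add_w (w := fun q => TT (L1 n₁ d) w q + TT (L2 n₂ d) w q) (w' := fun q => μ * TT d w q) hF.continuous hV ((TT_cont (L1_cont n₁ hd) (hVd.L1 n₁) hc).add (TT_cont (L2_cont n₂ hd) (hVd.L2 n₂) hc))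
    (continuous_const.mul (TT_cont hd.continuous hVd hc))]
  simp_rw [← TT_LL μ hd hVd hc, hw.2 d hd hVd]
  simp [TT]

/-- translation invariance of the class -/
lemma TT_shift {n₁ n₂ : ℕ} {F : ℝ × ℝ → ℝ} {w : EE n₁ n₂ → ℝ} (p : EE n₁ n₂) :
    TT F (fun g => w (actE p g)) 0 = TT F w p := by
  rw [TT_translate F w p]; rfl

lemma binom_lemma {α : Type*} (S : Submodule ℝ (α → ℝ)) (D : Module.End ℝ S) (k : ℝ) (hk : 0 < k)
    (hD : ∀ w : S, (∀ x, 0 ≤ w.1 x) → ∀ x, |(D w).1 x| ≤ k * w.1 x) (u v : S) (hu : D u = 0)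
    (hv0 : ∀ x, 0 ≤ v.1 x) (hvu : ∀ x, v.1 x ≤ u.1 x) : D v = 0 := by
  set P : Module.End ℝ S := (1/2 : ℝ) • (1 + (1/k) • D) with hP
  set Q : Module.End ℝ S := 1 - P with hQ
  have hPx : ∀ (w : S) x, (P w).1 x = (w.1 x + (D w).1 x / k) / 2 := by
    intro w x; simp [hP]; ring
  have hQx : ∀ (w : S) x, (Q w).1 x = (w.1 x - (D w).1 x / k) / 2 := by
    intro w x
    have : (Q w).1 x = w.1 x - (P w).1 x := by simp [hQ]
    rw [this, hPx]; ring
  have key : ∀ w : S, (∀ x, 0 ≤ w.1 x) → ∀ x, |(D w).1 x / k| ≤ w.1 x := by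
    intro w hw x
    rw [abs_div, abs_of_pos hk, div_le_iff₀ hk, mul_comm]
    exact hD w hw x
  have hPpos : ∀ w : S, (∀ x, 0 ≤ w.1 x) → ∀ x, 0 ≤ (P w).1 x := by
    intro w hw x
    have := abs_le.1 (key w hw x)
    rw [hPx]; linarith
  have hQpos : ∀ w : S, (∀ x, 0 ≤ w.1 x) → ∀ x, 0 ≤ (Q w).1 x := by
    intro w hw x
    have := abs_le.1 (key w hw x)
    rw [hQx]; linarith
  have hpowpos : ∀ (A : Module.End ℝ S), (∀ w : S, (∀ x, 0 ≤ w.1 x) → ∀ x, 0 ≤ (A w).1 x) →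
      ∀ m : ℕ, ∀ w : S, (∀ x, 0 ≤ w.1 x) → ∀ x, 0 ≤ ((A ^ m) w).1 x := by
    intro A hA m
    induction m with
    | zero => intro w hw x; simpa using hw x
    | succ m ih => 
      intro w hw x
      rw [pow_succ]
      exact ih _ (hA w hw) x
  set b : ℕ → ℕ → Module.End ℝ S := fun n ν => Polynomial.aeval P (bernsteinPolynomial ℝ n ν) with hb
  have hbx : ∀ n ν, b n ν = (n.choose ν : ℝ) • (P ^ ν * Q ^ (n - ν)) := by
    intro n ν
    simp only [hb, bernsteinPolynomial, map_mul, map_pow, map_sub, Polynomial.aeval_X, map_one, map_natCast, hQ]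
    rw [mul_assoc, ← nsmul_eq_mul, Nat.cast_smul_eq_nsmul]
  have hbpos : ∀ n ν (w : S), (∀ x, 0 ≤ w.1 x) → ∀ x, 0 ≤ ((b n ν) w).1 x := by
    intro n ν w hw x
    rw [hbx]
    have := hpowpos P hPpos ν _ (hpowpos Q hQpos (n - ν) w hw) x
    have h2 : (((n.choose ν : ℝ) • (P ^ ν * Q ^ (n - ν))) w).1 x = (n.choose ν : ℝ) * ((P ^ ν) ((Q ^ (n - ν)) w)).1 x := rfl
    rw [h2]; positivity
  have hPu : P u = (1/2 : ℝ) • u := by simp [hP, hu]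
  have hbu : ∀ q : Polynomial ℝ, Polynomial.aeval P q u = q.eval (1/2) • u := by
    intro q
    induction q using Polynomial.induction_on' with
    | add p q hp hq => simp [hp, hq, add_smul]
    | monomial m a => 
      have : ∀ m : ℕ, (P ^ m) u = ((1/2 : ℝ)) ^ m • u := by
        intro m
        induction m with
        | zero => simp
        | succ m ih => rw [pow_succ, Module.End.mul_apply, hPu, map_smul, ih, smul_smul, pow_succ, mul_comm]
      rw [Polynomial.aeval_monomial, Polynomial.eval_monomial, Module.End.mul_apply, this, Module.algebraMap_end_apply, smul_smul]
  have hsum1 : ∀ n : ℕ, ∑ ν ∈ Finset.range (n+1), (2 * (ν:ℝ) - n) • b n ν = ((n:ℝ) / k) • D := by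
    intro n
    have h1 := congrArg (Polynomial.aeval P) (bernsteinPolynomial.sum ℝ n)
    have h2 := congrArg (Polynomial.aeval P) (bernsteinPolynomial.sum_smul ℝ n)
    simp only [map_sum, map_one, map_nsmul, Polynomial.aeval_X] at h1 h2
    have h3 : ∑ ν ∈ Finset.range (n+1), (2 * (ν:ℝ) - n) • b n ν
       = (2:ℝ) • (∑ ν ∈ Finset.range (n+1), ν • b n ν) + (-(n:ℝ)) • ∑ ν ∈ Finset.range (n+1), b n ν := by
      rw [Finset.smul_sum, Finset.smul_sum, ← Finset.sum_add_distrib]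
      refine Finset.sum_congr rfl fun ν _ => ?_
      rw [← Nat.cast_smul_eq_nsmul ℝ ν, smul_smul, ← add_smul, sub_eq_add_neg]
    rw [h3, h1, h2, hP, ← Nat.cast_smul_eq_nsmul ℝ]
    module
  set c : ℕ → ℕ → ℝ := fun n ν => (bernsteinPolynomial ℝ n ν).eval (1/2) with hc
  have hcpos : ∀ n ν, 0 ≤ c n ν := by
    intro n ν
    simp only [hc, bernsteinPolynomial]
    simp
    norm_num
  have hc1 : ∀ n, ∑ ν ∈ Finset.range (n+1), c n ν = 1 := by
    intro n
    have h1 := congrArg (Polynomial.eval (1/2)) (bernsteinPolynomial.sum ℝ n)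
    simpa only [Polynomial.eval_finsetSum, Polynomial.eval_one] using h1
  have hc2 : ∀ n : ℕ, ∑ ν ∈ Finset.range (n+1), (2 * (ν:ℝ) - n) ^ 2 * c n ν = (n:ℝ) := by
    intro n
    have h1 := congrArg (Polynomial.eval (1/2)) (bernsteinPolynomial.variance ℝ n)
    simp only [Polynomial.eval_finsetSum, Polynomial.eval_mul, Polynomial.eval_pow, Polynomial.eval_sub, Polynomial.eval_smul, Polynomial.eval_X, Polynomial.eval_natCast, Polynomial.eval_one] at h1
    have h2 : ∑ ν ∈ Finset.range (n+1), (2 * (ν:ℝ) - n) ^ 2 * c n ν = 4 * ∑ ν ∈ Finset.range (n + 1), (n • (1/2:ℝ) - (ν:ℝ)) ^ 2 * Polynomial.eval (1/2) (bernsteinPolynomial ℝ n ν) := by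
      rw [Finset.mul_sum]
      refine Finset.sum_congr rfl fun ν _ => ?_
      simp only [hc, nsmul_eq_mul]; ring
    rw [h2, h1]; simp only [nsmul_eq_mul]; ring
  have hbvx : ∀ n ν x, ((b n ν) v).1 x ≤ c n ν * u.1 x := by
    intro n ν x
    have h1 := hbpos n ν (u - v) (fun x => by simpa using hvu x) x
    rw [map_sub] at h1
    have h2 : ((b n ν) u) = c n ν • u := hbu _
    rw [h2] at h1
    simpa using h1
  have main : ∀ t : ℕ, 0 < t → ∀ x, (t:ℝ) * |(D v).1 x| ≤ k * u.1 x := by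
    intro t ht x
    have htr : (0:ℝ) < t := by exact_mod_cast ht
    have hux : 0 ≤ u.1 x := (hv0 x).trans (hvu x)
    have h1 : (((t^2 : ℕ):ℝ) / k) * (D v).1 x = ∑ ν ∈ Finset.range (t^2+1), (2 * (ν:ℝ) - (t^2:ℕ)) * ((b (t^2) ν) v).1 x := by
      have := congrArg (fun A : Module.End ℝ S => (A v).1 x) (hsum1 (t^2))
      simp only [LinearMap.sum_apply, LinearMap.smul_apply] at this
      simp only [Submodule.coe_sum, Finset.sum_apply, Submodule.coe_smul, Pi.smul_apply, smul_eq_mul] at this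
      exact this.symm
    have h2 : |(((t^2 : ℕ):ℝ) / k) * (D v).1 x| ≤ t * u.1 x := by
      rw [h1]
      calc _ ≤ ∑ ν ∈ Finset.range (t^2+1), |(2 * (ν:ℝ) - (t^2:ℕ)) * ((b (t^2) ν) v).1 x| := Finset.abs_sum_le_sum_abs _ _
        _ ≤ ∑ ν ∈ Finset.range (t^2+1), ((t:ℝ)/2 * u.1 x * c (t^2) ν + u.1 x / (2*t) * ((2 * (ν:ℝ) - (t^2:ℕ))^2 * c (t^2) ν)) := by
          refine Finset.sum_le_sum fun ν _ => ?_
          rw [abs_mul, abs_of_nonneg (hbpos (t^2) ν v hv0 x)]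
          have h3 : |2 * (ν:ℝ) - (t^2:ℕ)| ≤ t/2 + (2 * (ν:ℝ) - (t^2:ℕ))^2 / (2*t) := by
            rw [← sq_abs (2 * (ν:ℝ) - (t^2:ℕ))]
            set A := |2 * (ν:ℝ) - (t^2:ℕ)|
            have : (t:ℝ)/2 + A^2/(2*t) - A = (t - A)^2/(2*t) := by field_simp; ring
            have h4 : 0 ≤ (t - A)^2/(2*t) := by positivity
            linarith
          calc _ ≤ |2 * (ν:ℝ) - (t^2:ℕ)| * (c (t^2) ν * u.1 x) := by
                apply mul_le_mul_of_nonneg_left (hbvx _ _ _) (abs_nonneg _)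
            _ ≤ (t/2 + (2 * (ν:ℝ) - (t^2:ℕ))^2 / (2*t)) * (c (t^2) ν * u.1 x) := by
                apply mul_le_mul_of_nonneg_right h3 (mul_nonneg (hcpos _ _) hux)
            _ = _ := by field_simp
        _ = t * u.1 x := by
          rw [Finset.sum_add_distrib, ← Finset.mul_sum, ← Finset.mul_sum, hc1, hc2]
          push_cast
          field_simp
          ring
    rw [abs_mul, abs_of_nonneg (by positivity)] at h2
    push_cast at h2
    have h3 : (t:ℝ)^2 / k * |(D v).1 x| = t / k * (t * |(D v).1 x|) := by ring
    rw [h3, div_mul_eq_mul_div, div_le_iff₀ hk] at h2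
    have : (t:ℝ) * (t * |(D v).1 x|) ≤ t * (k * u.1 x) := by linarith
    exact le_of_mul_le_mul_left this htr
  ext x
  by_contra hne
  have hpos : 0 < |(D v).1 x| := abs_pos.2 hne
  obtain ⟨t, ht⟩ := exists_nat_gt (k * u.1 x / |(D v).1 x|)
  rw [div_lt_iff₀ hpos] at ht
  have := main (t+1) (by omega) x
  push_cast at this
  nlinarith

lemma pdv_zz (e x : ℝ × ℝ) : pdv e (fun x : ℝ × ℝ => x.1 + x.2 - 2) x = e.1 + e.2 := by
  apply pdv_eq (by fun_prop)
  have : HasDerivAt (fun t : ℝ => (x.1 + x.2 - 2) + t * (e.1 + e.2)) (1 * (e.1 + e.2)) 0 :=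
    ((hasDerivAt_id (0:ℝ)).mul_const (e.1 + e.2)).const_add (x.1 + x.2 - 2)
  rw [one_mul] at this
  convert this using 2 with t
  simp; ring

lemma pdv_zz2 (e x : ℝ × ℝ) : pdv e (pdv e (fun x : ℝ × ℝ => x.1 + x.2 - 2)) x = 0 := by
  have : pdv e (fun x : ℝ × ℝ => x.1 + x.2 - 2) = fun _ => e.1 + e.2 := funext (pdv_zz e)
  rw [this]; simp [pdv]

lemma L1_zz (n : ℕ) {G : ℝ → ℝ} (hG : ContDiff ℝ 2 G) (x : ℝ × ℝ) :
    L1 n (fun x => G (x.1 + x.2 - 2)) x = (x.1 ^ 2 - 1) * deriv (deriv G) (x.1 + x.2 - 2) + (n + 1) * x.1 * deriv G (x.1 + x.2 - 2) := by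
  unfold L1
  rw [pdv2_comp hG (c := fun x : ℝ × ℝ => x.1 + x.2 - 2) (by fun_prop),
    pdv_comp (hG.differentiable (by norm_num)) (c := fun x : ℝ × ℝ => x.1 + x.2 - 2) (by fun_prop), pdv_zz, pdv_zz2]
  simp
lemma L2_zz (n : ℕ) {G : ℝ → ℝ} (hG : ContDiff ℝ 2 G) (x : ℝ × ℝ) :
    L2 n (fun x => G (x.1 + x.2 - 2)) x = (x.2 ^ 2 - 1) * deriv (deriv G) (x.1 + x.2 - 2) + (n + 1) * x.2 * deriv G (x.1 + x.2 - 2) := by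
  unfold L2
  rw [pdv2_comp hG (c := fun x : ℝ × ℝ => x.1 + x.2 - 2) (by fun_prop),
    pdv_comp (hG.differentiable (by norm_num)) (c := fun x : ℝ × ℝ => x.1 + x.2 - 2) (by fun_prop), pdv_zz, pdv_zz2]
  simp

/-- the cutoff -/
noncomputable def th (K z : ℝ) : ℝ := expNegInvGlue ((1 - z) / K)
noncomputable def th' (K z : ℝ) : ℝ := -(K * ((1 - z) ^ 2)⁻¹ * expNegInvGlue ((1 - z) / K))

lemma th_contDiff (K : ℝ) {m : ℕ∞} : ContDiff ℝ m (th K) := by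
  have : ContDiff ℝ m (fun z : ℝ => (1 - z) / K) := by fun_prop
  exact expNegInvGlue.contDiff.comp this

lemma th_hasDerivAt (K : ℝ) (hK : 0 < K) (z : ℝ) : HasDerivAt (th K) (th' K z) z := by
  have h := expNegInvGlue.hasDerivAt_polynomial_eval_inv_mul 1 ((1 - z) / K)
  simp only [Polynomial.eval_one, one_mul, Polynomial.derivative_one, sub_zero, mul_one, Polynomial.eval_pow, Polynomial.eval_X] at h
  have h2 : HasDerivAt (fun z : ℝ => (1 - z) / K) (-1 / K) z := ((hasDerivAt_id z).const_sub 1).div_const K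
  have h3 := HasDerivAt.comp z h h2
  refine h3.congr_deriv ?_
  unfold th'
  by_cases hz : 1 - z = 0
  · simp [hz]
  · field_simp

lemma th_nonneg (K z : ℝ) : 0 ≤ th K z := expNegInvGlue.nonneg _
lemma th_zero {K z : ℝ} (hK : 0 < K) (hz : 1 ≤ z) : th K z = 0 := by
  apply expNegInvGlue.zero_of_nonpos
  apply div_nonpos_of_nonpos_of_nonneg <;> linarith
lemma th_pos {K z : ℝ} (hK : 0 < K) (hz : z < 1) : 0 < th K z := by
  apply expNegInvGlue.pos_of_pos
  apply div_pos <;> linarith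
lemma th_anti {K : ℝ} (hK : 0 < K) : Antitone (th K) := by
  apply antitone_of_deriv_nonpos (fun z => (th_hasDerivAt K hK z).differentiableAt)
  intro z
  rw [(th_hasDerivAt K hK z).deriv]
  unfold th'
  have := expNegInvGlue.nonneg ((1 - z) / K)
  have : 0 ≤ K * ((1 - z) ^ 2)⁻¹ * expNegInvGlue ((1 - z) / K) := by positivity
  linarith
lemma th'_le {K z : ℝ} (hK : 0 < K) (h0 : 0 ≤ z) (h1 : z ≤ 1) : th' K z ≤ - (K * th K z) := by
  rcases h1.eq_or_lt with h1 | h1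
  · subst h1; simp [th', th]
  · unfold th' th
    have h2 : 1 ≤ ((1 - z)^2)⁻¹ := by
      rw [one_le_inv₀ (by nlinarith)]; nlinarith
    have := expNegInvGlue.nonneg ((1 - z) / K)
    have h3 : K * expNegInvGlue ((1 - z) / K) * 1 ≤ K * expNegInvGlue ((1 - z) / K) * ((1 - z)^2)⁻¹ :=
      mul_le_mul_of_nonneg_left h2 (by positivity)
    linarith

noncomputable def PP (a ε t : ℝ) : ℝ := (t ^ 2 + ε ^ 2) ^ (-a)

lemma PP_contDiff (a : ℝ) {ε : ℝ} (hε : 0 < ε) {m : WithTop ℕ∞} : ContDiff ℝ m (PP a ε) := by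
  unfold PP
  exact ContDiff.rpow_const_of_ne (by fun_prop) (fun t => by positivity)

lemma PP_pos (a : ℝ) {ε : ℝ} (hε : 0 < ε) (t : ℝ) : 0 < PP a ε t := by unfold PP; positivity

lemma PP_hasDerivAt (a : ℝ) {ε : ℝ} (hε : 0 < ε) (t : ℝ) :
    HasDerivAt (PP a ε) (-(2 * a * (t / (t ^ 2 + ε ^ 2)) * PP a ε t)) t := by
  have h : HasDerivAt (fun t : ℝ => t ^ 2 + ε ^ 2) (2 * t) t := by
    simpa using (hasDerivAt_pow 2 t).add_const (ε ^ 2)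
  have hp : 0 < t ^ 2 + ε ^ 2 := by positivity
  have := h.rpow_const (p := -a) (Or.inl hp.ne')
  refine this.congr_deriv ?_
  unfold PP
  rw [rpow_sub_one hp.ne']
  ring

/-- the radial test function -/
noncomputable def GG (a ε K z : ℝ) : ℝ := ∫ t in z..1, PP a ε t * th K t

lemma gg_cont (a : ℝ) {ε : ℝ} (hε : 0 < ε) (K : ℝ) : Continuous (fun t => PP a ε t * th K t) :=
  (PP_contDiff (m := 0) a hε).continuous.mul (th_contDiff K (m := 0)).continuous

lemma GG_hasDerivAt (a : ℝ) {ε : ℝ} (hε : 0 < ε) (K z : ℝ) : HasDerivAt (GG a ε K) (-(PP a ε z * th K z)) z := by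
  have hc := gg_cont a hε K
  exact intervalIntegral.integral_hasDerivAt_left (hc.intervalIntegrable _ _) (hc.stronglyMeasurableAtFilter _ _) hc.continuousAt

lemma GG_deriv (a : ℝ) {ε : ℝ} (hε : 0 < ε) (K : ℝ) : deriv (GG a ε K) = fun z => -(PP a ε z * th K z) :=
  funext fun z => (GG_hasDerivAt a hε K z).deriv

lemma GG_deriv2 (a : ℝ) {ε : ℝ} (hε : 0 < ε) {K : ℝ} (hK : 0 < K) (z : ℝ) :
    deriv (deriv (GG a ε K)) z = PP a ε z * (2 * a * (z / (z ^ 2 + ε ^ 2)) * th K z - th' K z) := by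
  rw [GG_deriv a hε]
  have h : HasDerivAt (fun z => -(PP a ε z * th K z)) _ z := ((PP_hasDerivAt a hε z).mul (th_hasDerivAt K hK z)).neg
  rw [h.deriv]
  ring

lemma GG_contDiff (a : ℝ) {ε : ℝ} (hε : 0 < ε) (K : ℝ) : ContDiff ℝ 2 (GG a ε K) := by
  rw [show (2 : WithTop ℕ∞) = 1 + 1 from by norm_num, contDiff_succ_iff_deriv]
  refine ⟨fun z => (GG_hasDerivAt a hε K z).differentiableAt, by simp, ?_⟩
  rw [GG_deriv a hε]
  exact ((PP_contDiff a hε).mul (th_contDiff K (m := 1))).neg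

lemma GG_zero (a : ℝ) (ε : ℝ) {K z : ℝ} (hK : 0 < K) (hz : 1 ≤ z) : GG a ε K z = 0 := by
  unfold GG
  rw [intervalIntegral.integral_symm]
  rw [intervalIntegral.integral_congr (g := fun _ => 0)]
  · simp
  · intro t ht
    rw [Set.uIcc_of_le hz] at ht
    simp [th_zero hK ht.1]

lemma GG_nonneg (a : ℝ) {ε : ℝ} (hε : 0 < ε) {K z : ℝ} (hz : z ≤ 1) : 0 ≤ GG a ε K z := by
  unfold GG
  apply intervalIntegral.integral_nonneg hz
  intro t _
  exact mul_nonneg (PP_pos a hε t).le (th_nonneg K t)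

lemma GG_le {a ε : ℝ} (ha : 1 ≤ a) (hε : 0 < ε) {K z : ℝ} (hK : 0 < K) (h0 : 0 ≤ z) (hz : z ≤ 1) :
    GG a ε K z ≤ 2 ^ a * (z + ε) * PP a ε z * th K z := by
  set H : ℝ → ℝ := fun z => 2 ^ a * (z + ε) ^ (1 - 2 * a) * th K z - GG a ε K z with hH
  have h2a : (0:ℝ) < 2 ^ a := by positivity
  have hd : ∀ t ∈ Set.Icc (0:ℝ) 1, HasDerivAt H
      (2 ^ a * ((1 - 2 * a) * (t + ε) ^ (-(2 * a))) * th K t + 2 ^ a * (t + ε) ^ (1 - 2 * a) * th' K t + PP a ε t * th K t) t := by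
    intro t ht
    have hp : 0 < t + ε := by linarith [ht.1]
    have h1 : HasDerivAt (fun t : ℝ => t + ε) 1 t := (hasDerivAt_id t).add_const ε
    have h2 := ((h1.rpow_const (p := 1 - 2 * a) (Or.inl hp.ne')).const_mul (2 ^ a)).mul (th_hasDerivAt K hK t)
    refine (h2.sub (GG_hasDerivAt a hε K t)).congr_deriv ?_
    rw [show 1 - 2 * a - 1 = -(2 * a) by ring]
    ring
  have hanti : AntitoneOn H (Set.Icc 0 1) := by
    apply antitoneOn_of_deriv_nonpos (convex_Icc 0 1)
    · intro t ht; exact (hd t ht).continuousAt.continuousWithinAt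
    · intro t ht; rw [interior_Icc] at ht
      exact (hd t ⟨ht.1.le, ht.2.le⟩).differentiableAt.differentiableWithinAt
    · intro t ht; rw [interior_Icc] at ht
      rw [(hd t ⟨ht.1.le, ht.2.le⟩).deriv]
      have hp : 0 < t + ε := by linarith [ht.1]
      have hth := th_nonneg K t
      have hth' : th' K t ≤ 0 := (th'_le hK ht.1.le ht.2.le).trans (by nlinarith)
      have hPP : PP a ε t ≤ 2 ^ a * (t + ε) ^ (-(2 * a)) := by
        have e1 : (t + ε) ^ (-(2 * a)) = ((t + ε) ^ 2) ^ (-a) := by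
          rw [← rpow_natCast, ← rpow_mul hp.le]; norm_num
        have e2 : (2:ℝ) ^ a = (1/2) ^ (-a) := by
          rw [one_div, inv_rpow (by norm_num), rpow_neg (by norm_num), inv_inv]
        rw [e1, e2, ← mul_rpow (by norm_num) (by positivity)]
        unfold PP
        apply rpow_le_rpow_of_nonpos (by positivity) _ (by linarith)
        nlinarith [sq_nonneg (t - ε)]
      set Q := (t + ε) ^ (-(2 * a)) with hQ
      have hQp : 0 < Q := by positivity
      have hR : 0 < (t + ε) ^ (1 - 2 * a) := by positivity
      have c1 : PP a ε t * th K t ≤ 2 ^ a * Q * th K t := mul_le_mul_of_nonneg_right hPP hth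
      have c2 : 2 ^ a * (t + ε) ^ (1 - 2 * a) * th' K t ≤ 0 := mul_nonpos_of_nonneg_of_nonpos (by positivity) hth'
      have c3 : 2 ^ a * ((1 - 2 * a) * Q) * th K t + 2 ^ a * Q * th K t ≤ 0 := by
        have : 2 ^ a * ((1 - 2 * a) * Q) * th K t + 2 ^ a * Q * th K t = (2 - 2 * a) * (2 ^ a * Q * th K t) := by ring
        rw [this]
        apply mul_nonpos_of_nonpos_of_nonneg (by linarith) (by positivity)
      linarith
  have h1 : H 1 ≤ H z := hanti ⟨h0, hz⟩ ⟨zero_le_one, le_rfl⟩ hz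
  have h2 : H 1 = 0 := by simp [hH, th_zero hK le_rfl, GG_zero a ε hK le_rfl]
  rw [h2] at h1
  have h3 : GG a ε K z ≤ 2 ^ a * (z + ε) ^ (1 - 2 * a) * th K z := by simp only [hH] at h1; linarith
  refine h3.trans ?_
  have hp : 0 < z + ε := by linarith
  have h4 : (z + ε) ^ (1 - 2 * a) ≤ (z + ε) * PP a ε z := by
    rw [sub_eq_add_neg, rpow_add hp, rpow_one]
    apply mul_le_mul_of_nonneg_left _ hp.le
    have e1 : (z + ε) ^ (-(2 * a)) = ((z + ε) ^ 2) ^ (-a) := by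
      rw [← rpow_natCast, ← rpow_mul hp.le]; norm_num
    rw [e1]; unfold PP
    apply rpow_le_rpow_of_nonpos (by positivity) _ (by linarith)
    nlinarith
  have hth := th_nonneg K z
  calc 2 ^ a * (z + ε) ^ (1 - 2 * a) * th K z ≤ 2 ^ a * ((z + ε) * PP a ε z) * th K z := by gcongr
    _ = _ := by ring

lemma PP_lower {a ε z : ℝ} (ha : 1 ≤ a) (hε : 0 < ε) (hε1 : ε ≤ 1) (h0 : 0 ≤ z) (hz : z ≤ 1) :
    (2:ℝ) ^ (-a) / 2 ≤ (z + ε ^ 2 / (z ^ 2 + ε ^ 2)) * PP a ε z := by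
  have h2 : (0:ℝ) < 2 ^ (-a) := by positivity
  have hP := PP_pos a hε z
  have hS : 0 < z ^ 2 + ε ^ 2 := by positivity
  have hκ : 0 < ε ^ 2 / (z ^ 2 + ε ^ 2) := by positivity
  rcases le_or_gt z ε with h | h
  · have k1 : 1 / 2 ≤ ε ^ 2 / (z ^ 2 + ε ^ 2) := by
      rw [div_le_div_iff₀ (by norm_num) hS]; nlinarith
    have k2 : 2 ^ (-a) ≤ PP a ε z := by
      unfold PP
      apply rpow_le_rpow_of_nonpos hS _ (by linarith)
      nlinarith
    nlinarith [mul_nonneg h0 hP.le]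
  · have hz0 : 0 < z := hε.trans h
    have k2 : 2 ^ (-a) * (z ^ 2)⁻¹ ≤ PP a ε z := by
      have : 2 ^ (-a) * (z ^ 2)⁻¹ ≤ 2 ^ (-a) * (z ^ 2) ^ (-a) := by
        gcongr
        rw [← rpow_neg_one]
        apply rpow_le_rpow_of_exponent_ge (by positivity) (by nlinarith) (by linarith)
      refine this.trans ?_
      rw [← mul_rpow (by norm_num) (by positivity)]
      unfold PP
      apply rpow_le_rpow_of_nonpos hS _ (by linarith)
      nlinarith
    have k3 : 2 ^ (-a) ≤ z * PP a ε z := by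
      calc (2:ℝ) ^ (-a) ≤ z * (2 ^ (-a) * (z ^ 2)⁻¹) := by
            rw [show z * (2 ^ (-a) * (z ^ 2)⁻¹) = 2 ^ (-a) * z⁻¹ by field_simp]
            exact le_mul_of_one_le_right h2.le ((one_le_inv₀ hz0).2 hz)
        _ ≤ _ := by gcongr
    nlinarith [mul_nonneg hκ.le hP.le]

noncomputable def aa (n₁ n₂ : ℕ) : ℝ := (n₁ + n₂ + 2) / 4
noncomputable def KK (n₁ n₂ : ℕ) (μ : ℝ) : ℝ := (n₁ + n₂ + 2) + 2 * 2 ^ (aa n₁ n₂) * |μ| + 1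

lemma KK_pos (n₁ n₂ : ℕ) (μ : ℝ) : 0 < KK n₁ n₂ μ := by unfold KK; positivity

noncomputable def FF (n₁ n₂ : ℕ) (μ ε : ℝ) (x : ℝ × ℝ) : ℝ := GG (aa n₁ n₂) ε (KK n₁ n₂ μ) (x.1 + x.2 - 2)

lemma FF_contDiff (n₁ n₂ : ℕ) (μ : ℝ) {ε : ℝ} (hε : 0 < ε) : ContDiff ℝ 2 (FF n₁ n₂ μ ε) :=
  (GG_contDiff (aa n₁ n₂) hε (KK n₁ n₂ μ)).comp (by fun_prop : ContDiff ℝ 2 (fun x : ℝ × ℝ => x.1 + x.2 - 2))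

lemma FF_van (n₁ n₂ : ℕ) (μ ε : ℝ) : ∀ x : ℝ × ℝ, 3 < x.1 + x.2 → FF n₁ n₂ μ ε x = 0 := by
  intro x hx
  exact GG_zero _ _ (KK_pos n₁ n₂ μ) (by linarith)

lemma LL_lower_arith (n1 n2 N z α β P κ T T' G μ C K S a : ℝ) (hN : N = n1 + n2 + 2) (h1 : 1 ≤ n1) (h2 : 1 ≤ n2)
    (hα : 0 ≤ α) (hβ : 0 ≤ β) (hz : z = α + β) (hP : 0 < P) (hT : 0 ≤ T) (hT' : T' ≤ -(K * T)) (hG0 : 0 ≤ G)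
    (hG : G ≤ C * (z + z + 2 * κ) * P * T) (hC : 0 < C) (hK : K = N + 2 * C * |μ| + 1) (ha : a = N / 4)
    (hS : z * S = 1 - κ) (hS0 : 0 ≤ S) (hκ : 0 ≤ κ) :
    K * (z - κ) * P * T ≤ ((1 + α) ^ 2 - 1) * (P * (2 * a * S * T - T')) + (n1 + 1) * (1 + α) * (-(P * T))
      + (((1 + β) ^ 2 - 1) * (P * (2 * a * S * T - T')) + (n2 + 1) * (1 + β) * (-(P * T))) + μ * G := by
  have hz0 : 0 ≤ z := by linarith
  have hN4 : 4 ≤ N := by linarith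
  have hK0 : 0 < K := by rw [hK]; positivity
  have e1 : ((1 + α) ^ 2 - 1) * (P * (2 * a * S * T - T')) + (n1 + 1) * (1 + α) * (-(P * T))
      + (((1 + β) ^ 2 - 1) * (P * (2 * a * S * T - T')) + (n2 + 1) * (1 + β) * (-(P * T))) =
      (2 * z + α ^ 2 + β ^ 2) * (P * (2 * a * S * T - T')) - (N + (n1 + 1) * α + (n2 + 1) * β) * (P * T) := by
    rw [hN, hz]; ring
  rw [e1]
  have hPT : 0 ≤ P * T := by positivity
  have hm : 0 ≤ P * (2 * a * S * T - T') := by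
    apply mul_nonneg hP.le
    have : 0 ≤ a := by linarith
    have : 0 ≤ 2 * a * S * T := by positivity
    have : 0 ≤ K * T := by positivity
    linarith
  have i1 : 2 * z * (P * (2 * a * S * T - T')) ≤ (2 * z + α ^ 2 + β ^ 2) * (P * (2 * a * S * T - T')) :=
    mul_le_mul_of_nonneg_right (by nlinarith) hm
  have i2 : 2 * z * (P * (2 * a * S * T - T')) = N * (1 - κ) * (P * T) + 2 * z * P * (- T') := by
    rw [← hS, ha]; ring
  have i3 : 2 * z * P * (K * T) ≤ 2 * z * P * (-T') := mul_le_mul_of_nonneg_left (by linarith) (by positivity)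
  have i4 : (N + (n1 + 1) * α + (n2 + 1) * β) * (P * T) ≤ (N + N * z) * (P * T) := by
    apply mul_le_mul_of_nonneg_right _ hPT
    rw [hN, hz]
    nlinarith
  have i5 : -(|μ| * (C * (z + z + 2 * κ) * P * T)) ≤ μ * G := by
    have : |μ| * G ≤ |μ| * (C * (z + z + 2 * κ) * P * T) := mul_le_mul_of_nonneg_left hG (abs_nonneg μ)
    have h3 : -(|μ| * G) ≤ μ * G := by
      have := neg_abs_le μ
      nlinarith
    linarith
  have i6 : K * (z - κ) * P * T ≤ N * (1 - κ) * (P * T) + 2 * z * P * (K * T) - (N + N * z) * (P * T) -(|μ| * (C * (z + z + 2 * κ) * P * T)) := by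
    have : N * (1 - κ) * (P * T) + 2 * z * P * (K * T) - (N + N * z) * (P * T) -(|μ| * (C * (z + z + 2 * κ) * P * T)) - K * (z - κ) * P * T
       = (z + κ) * (P * T) := by rw [hK]; ring
    have h3 : 0 ≤ (z + κ) * (P * T) := by positivity
    linarith
  linarith

lemma LL_lower (n₁ n₂ : ℕ) (hn₁ : 1 ≤ n₁) (hn₂ : 1 ≤ n₂) (μ : ℝ) {ε : ℝ} (hε : 0 < ε) (hε1 : ε ≤ 1)
    (x : ℝ × ℝ) (hx1 : 1 ≤ x.1) (hx2 : 1 ≤ x.2) :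
    KK n₁ n₂ μ * (2 ^ (-aa n₁ n₂) / 2) * th (KK n₁ n₂ μ) (x.1 + x.2 - 2)
      - 2 * KK n₁ n₂ μ * (ε ^ 2 * ((x.1 + x.2 - 2) ^ 2 + ε ^ 2) ^ (-aa n₁ n₂ - 1)) * th (KK n₁ n₂ μ) (x.1 + x.2 - 2)
    ≤ LL n₁ n₂ μ (FF n₁ n₂ μ ε) x := by
  set K := KK n₁ n₂ μ with hKdef
  set a := aa n₁ n₂ with hadef
  set z := x.1 + x.2 - 2 with hzdef
  have hK : 0 < K := KK_pos n₁ n₂ μ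
  have hr1 : (1:ℝ) ≤ n₁ := by exact_mod_cast hn₁
  have hr2 : (1:ℝ) ≤ n₂ := by exact_mod_cast hn₂
  have ha : 1 ≤ a := by rw [hadef]; unfold aa; linarith
  have hz0 : 0 ≤ z := by linarith
  rcases lt_or_ge 1 z with hz | hz
  · rw [th_zero hK hz.le]
    have hvan : LL n₁ n₂ μ (FF n₁ n₂ μ ε) x = 0 := by
      unfold LL FF
      rw [L1_zz _ (GG_contDiff a hε K), L2_zz _ (GG_contDiff a hε K), GG_deriv2 a hε hK, GG_deriv a hε K,
        ← hzdef, th_zero hK hz.le, GG_zero a ε hK hz.le]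
      have : th' K z = 0 := by
        have := th_zero hK hz.le
        unfold th at this
        unfold th'; rw [this]; simp
      rw [this]; simp only [th_zero hK hz.le]; ring
    rw [hvan]; simp
  · have hS : 0 < z ^ 2 + ε ^ 2 := by positivity
    have key := LL_lower_arith n₁ n₂ (n₁ + n₂ + 2) z (x.1 - 1) (x.2 - 1) (PP a ε z) (ε ^ 2 / (z ^ 2 + ε ^ 2))
      (th K z) (th' K z) (GG a ε K z) μ (2 ^ a) K (z / (z ^ 2 + ε ^ 2)) a rfl hr1 hr2 (by linarith) (by linarith)
      (by rw [hzdef]; ring) (PP_pos a hε z) (th_nonneg K z) (th'_le hK hz0 hz) (GG_nonneg a hε hz) ?_ (by positivity)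
      rfl rfl (by field_simp; ring) (by positivity) (by positivity)
    · have e : LL n₁ n₂ μ (FF n₁ n₂ μ ε) x = ((1 + (x.1 - 1)) ^ 2 - 1) * (PP a ε z * (2 * a * (z / (z ^ 2 + ε ^ 2)) * th K z - th' K z)) + ((n₁:ℝ) + 1) * (1 + (x.1 - 1)) * (-(PP a ε z * th K z))
      + (((1 + (x.2 - 1)) ^ 2 - 1) * (PP a ε z * (2 * a * (z / (z ^ 2 + ε ^ 2)) * th K z - th' K z)) + ((n₂:ℝ) + 1) * (1 + (x.2 - 1)) * (-(PP a ε z * th K z))) + μ * GG a ε K z := by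
        unfold LL FF
        rw [L1_zz _ (GG_contDiff a hε K), L2_zz _ (GG_contDiff a hε K), GG_deriv2 a hε hK, GG_deriv a hε K,
        ← hzdef]
        simp only [add_sub_cancel]
        rfl
      rw [e]
      refine le_trans ?_ key
      have hlow := PP_lower ha hε hε1 hz0 hz
      have e2 : ε ^ 2 * (z ^ 2 + ε ^ 2) ^ (-a - 1) = ε ^ 2 / (z ^ 2 + ε ^ 2) * PP a ε z := by
        unfold PP; rw [rpow_sub_one hS.ne']; ring
      rw [e2]
      have := mul_le_mul_of_nonneg_left hlow (mul_nonneg hK.le (th_nonneg K z))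
      linarith
    · refine (GG_le ha hε hK hz0 hz).trans ?_
      have := PP_pos a hε z
      have := th_nonneg K z
      have hle : ε ≤ z + 2 * (ε ^ 2 / (z ^ 2 + ε ^ 2)) := by
        rcases le_or_gt ε z with h | h
        · have : 0 ≤ ε ^ 2 / (z ^ 2 + ε ^ 2) := by positivity
          linarith
        · have : 1 / 2 ≤ ε ^ 2 / (z ^ 2 + ε ^ 2) := by
            rw [div_le_div_iff₀ (by norm_num) hS]; nlinarith
          linarith
      have h9 : z + ε ≤ z + z + 2 * (ε ^ 2 / (z ^ 2 + ε ^ 2)) := by linarith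
      have h2a : (0:ℝ) ≤ 2 ^ a := by positivity
      exact mul_le_mul_of_nonneg_right (mul_le_mul_of_nonneg_right (mul_le_mul_of_nonneg_left h9 h2a)
        (PP_pos a hε z).le) (th_nonneg K z)

noncomputable def zz {n₁ n₂ : ℕ} (q : EE n₁ n₂) : ℝ := cc 0 q.1 + cc 0 q.2 - 2

lemma cc_zero_zero {n : ℕ} : cc (0 : HH n) 0 = 1 := by simp [cc]
lemma zz_zero {n₁ n₂ : ℕ} : zz (0 : EE n₁ n₂) = 0 := by
  simp [zz, cc_zero_zero]; norm_num
lemma zz_nonneg {n₁ n₂ : ℕ} (q : EE n₁ n₂) : 0 ≤ zz q := by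
  unfold zz
  have := cc_ge_one 0 q.1
  have := cc_ge_one 0 q.2
  linarith
lemma zz_cont {n₁ n₂ : ℕ} : Continuous (zz (n₁ := n₁) (n₂ := n₂)) := by
  unfold zz
  have h1 := (cc_contDiff' (m := 0) (0 : HH n₁)).continuous
  have h2 := (cc_contDiff' (m := 0) (0 : HH n₂)).continuous
  fun_prop
lemma zz_lower {n₁ n₂ : ℕ} (q : EE n₁ n₂) (h : zz q ≤ 1) : ‖q‖ ^ 2 / 18 ≤ zz q := by
  unfold zz at h ⊢
  have h1 := cc_ge_one 0 q.1
  have h2 := cc_ge_one 0 q.2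
  have k1 := cc_lower q.1 (by linarith)
  have k2 := cc_lower q.2 (by linarith)
  rw [Prod.norm_def]
  rcases max_cases ‖q.1‖ ‖q.2‖ with ⟨h6, _⟩ | ⟨h6, _⟩
  · rw [h6]; linarith
  · rw [h6]; linarith
lemma rho_zero {n₁ n₂ : ℕ} : rho (0 : EE n₁ n₂) = 1 := by simp [rho]

lemma finrank_EE (n₁ n₂ : ℕ) : Module.finrank ℝ (EE n₁ n₂) = n₁ + n₂ + 2 := by
  simp [EE, HH]; ring

noncomputable def Phi {n₁ n₂ : ℕ} (q : EE n₁ n₂) : ℝ := (1 + ‖q‖ ^ 4 / 324) ^ (-aa n₁ n₂ - 1)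

lemma Phi_nonneg {n₁ n₂ : ℕ} (q : EE n₁ n₂) : 0 ≤ Phi q := by unfold Phi; positivity

lemma aa_pos (n₁ n₂ : ℕ) : 0 < aa n₁ n₂ := by unfold aa; positivity

lemma Phi_cont {n₁ n₂ : ℕ} : Continuous (Phi (n₁ := n₁) (n₂ := n₂)) := by
  unfold Phi
  apply Continuous.rpow_const (by fun_prop)
  intro q; left; positivity

lemma Phi_integrable (n₁ n₂ : ℕ) : Integrable (Phi (n₁ := n₁) (n₂ := n₂)) := by
  have ha := aa_pos n₁ n₂
  have h := integrable_one_add_norm (E := EE n₁ n₂) (μ := volume) (r := 4 * (aa n₁ n₂ + 1)) (by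
    rw [finrank_EE]; unfold aa; push_cast; linarith)
  refine (h.const_mul ((1/2592 : ℝ) ^ (-aa n₁ n₂ - 1))).mono' Phi_cont.aestronglyMeasurable (Filter.Eventually.of_forall fun q => ?_)
  rw [Real.norm_eq_abs, abs_of_nonneg (Phi_nonneg q)]
  set t := ‖q‖ with ht
  have ht0 : 0 ≤ t := norm_nonneg q
  have e1 : (1 + t) ^ (-(4 * (aa n₁ n₂ + 1))) = ((1 + t) ^ 4) ^ (-aa n₁ n₂ - 1) := by
    rw [← rpow_natCast, ← rpow_mul (by positivity)]; congr 1; push_cast; ring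
  rw [e1, ← mul_rpow (by norm_num) (by positivity)]
  unfold Phi
  apply rpow_le_rpow_of_nonpos (by positivity) _ (by linarith)
  have s1 : (1 + t) ^ 2 ≤ 2 * (1 + t ^ 2) := by nlinarith [sq_nonneg (1 - t)]
  have s2 : (1 + t ^ 2) ^ 2 ≤ 2 * (1 + t ^ 4) := by nlinarith [sq_nonneg (1 - t ^ 2)]
  have s3 : (1 + t) ^ 4 ≤ 8 * (1 + t ^ 4) := by
    have : ((1 + t) ^ 2) ^ 2 ≤ (2 * (1 + t ^ 2)) ^ 2 := by gcongr
    nlinarith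
  have s4 : 0 ≤ t ^ 4 := by positivity
  rw [← ht]
  linarith

lemma scaling {n₁ n₂ : ℕ} (W : EE n₁ n₂ → ℝ) {δ : ℝ} (hδ : 0 < δ) :
    ∫ q, (δ ^ 2) ^ 2 * ((‖q‖ ^ 2 / 18) ^ 2 + (δ ^ 2) ^ 2) ^ (-aa n₁ n₂ - 1) * W q = ∫ q, Phi q * W (δ • q) := by
  have h := Measure.integral_comp_smul (volume : Measure (EE n₁ n₂)) (fun q => (δ ^ 2) ^ 2 * ((‖q‖ ^ 2 / 18) ^ 2 + (δ ^ 2) ^ 2) ^ (-aa n₁ n₂ - 1) * W q) δ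
  rw [finrank_EE, abs_of_pos (by positivity), smul_eq_mul] at h
  have hN : 0 < δ ^ (n₁ + n₂ + 2) := by positivity
  rw [inv_mul_eq_div, eq_div_iff hN.ne'] at h
  rw [← h, ← integral_mul_const]
  congr 1; ext q
  rw [norm_smul, Real.norm_eq_abs, abs_of_pos hδ]
  have e1 : ((δ * ‖q‖) ^ 2 / 18) ^ 2 + (δ ^ 2) ^ 2 = δ ^ 4 * (1 + ‖q‖ ^ 4 / 324) := by ring
  rw [e1, mul_rpow (by positivity) (by positivity), ← Phi]
  have e2 : (δ ^ 4) ^ (-aa n₁ n₂ - 1) = (δ ^ 4)⁻¹ * (δ ^ (n₁ + n₂ + 2))⁻¹ := by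
    rw [← rpow_natCast δ 4, ← rpow_mul hδ.le, ← rpow_natCast δ (n₁ + n₂ + 2), ← rpow_neg hδ.le, ← rpow_neg hδ.le, ← rpow_add hδ]
    congr 1; unfold aa; push_cast; ring
  rw [e2]
  field_simp

lemma weak_harnack (n₁ n₂ : ℕ) (hn₁ : 1 ≤ n₁) (hn₂ : 1 ≤ n₂) (μ : ℝ) : ∃ C : ℝ, 0 < C ∧
    ∀ w : EE n₁ n₂ → ℝ, Continuous w → (∀ q, 0 ≤ w q) →
      (∀ F, ContDiff ℝ 2 F → Van F → TT (LL n₁ n₂ μ F) w 0 = 0) →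
      ∫ q, th (KK n₁ n₂ μ) (zz q) * w q * rho q ≤ C * w 0 := by
  set K := KK n₁ n₂ μ with hKdef
  have hK : 0 < K := KK_pos n₁ n₂ μ
  set a := aa n₁ n₂ with hadef
  set c := K * (2 ^ (-a) / 2) with hcdef
  have hc : 0 < c := by positivity
  set I := ∫ q : EE n₁ n₂, Phi q with hI
  have hI0 : 0 ≤ I := integral_nonneg Phi_nonneg
  have ht0 := th_nonneg K 0
  refine ⟨2 * K * I * th K 0 / c + 1, by positivity, fun w hw hw0 hsol => ?_⟩
  set W : EE n₁ n₂ → ℝ := fun q => th K (zz q) * w q * rho q with hW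
  have hWc : Continuous W := (((th_contDiff K (m := 0)).continuous.comp zz_cont).mul hw).mul rho_cont
  have hW0 : ∀ q, 0 ≤ W q := fun q => mul_nonneg (mul_nonneg (th_nonneg _ _) (hw0 q)) (rho_pos q).le
  have hWs : HasCompactSupport W := by
    have h := Ker_supp (n₁ := n₁) (n₂ := n₂) (F := fun x => th K (x.1 + x.2 - 2)) ⟨3, fun x hx => th_zero hK (by linarith)⟩ 0
    exact (h.mul_right).mul_right
  have hWi : Integrable W := hWc.integrable_of_hasCompactSupport hWs
  obtain ⟨B, hB⟩ := hWs.exists_bound_of_continuous hWc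
  have step : ∀ δ : ℝ, 0 < δ → δ ≤ 1 → c * ∫ q, W q ≤ 2 * K * ∫ q, Phi q * W (δ • q) := by
    intro δ hδ hδ1
    have hε : 0 < δ ^ 2 := by positivity
    have hε1 : δ ^ 2 ≤ 1 := by nlinarith
    have hF := FF_contDiff n₁ n₂ μ hε
    have hV : Van (FF n₁ n₂ μ (δ ^ 2)) := ⟨3, FF_van n₁ n₂ μ _⟩
    have h0 := hsol _ hF hV
    have hηc : Continuous fun q : EE n₁ n₂ => (δ ^ 2) ^ 2 * ((‖q‖ ^ 2 / 18) ^ 2 + (δ ^ 2) ^ 2) ^ (-a - 1) := by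
      apply continuous_const.mul
      apply Continuous.rpow_const (by fun_prop)
      intro q; left; positivity
    have hint2 : Integrable fun q : EE n₁ n₂ => (δ ^ 2) ^ 2 * ((‖q‖ ^ 2 / 18) ^ 2 + (δ ^ 2) ^ 2) ^ (-a - 1) * W q :=
      (hηc.mul hWc).integrable_of_hasCompactSupport hWs.mul_left
    rw [← scaling W hδ, ← integral_const_mul, ← integral_const_mul, ← sub_nonpos, ← integral_sub (hWi.const_mul c) (hint2.const_mul _)]
    rw [← h0]
    unfold TT
    have hLLc : Continuous (LL n₁ n₂ μ (FF n₁ n₂ μ (δ ^ 2))) := 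
      ((L1_cont n₁ hF).add (L2_cont n₂ hF)).add (continuous_const.mul hF.continuous)
    apply integral_mono ((hWi.const_mul c).sub (hint2.const_mul _))
      (TT_integrable hLLc (((hV.L1 n₁).add (hV.L2 n₂)).add (hV.mul_left μ)) hw 0)
    intro q
    have hlow := LL_lower n₁ n₂ hn₁ hn₂ μ hε hε1 (cc 0 q.1, cc 0 q.2) (cc_ge_one _ _) (cc_ge_one _ _)
    have hlow2 := mul_le_mul_of_nonneg_right hlow (mul_nonneg (hw0 q) (rho_pos q).le)
    have hcmp : (δ ^ 2) ^ 2 * (zz q ^ 2 + (δ ^ 2) ^ 2) ^ (-a - 1) * W q ≤ (δ ^ 2) ^ 2 * ((‖q‖ ^ 2 / 18) ^ 2 + (δ ^ 2) ^ 2) ^ (-a - 1) * W q := by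
      rcases lt_or_ge 1 (zz q) with hz | hz
      · have : W q = 0 := by simp [hW, th_zero hK hz.le]
        simp [this]
      · have := zz_lower q hz
        have ha := aa_pos n₁ n₂
        apply mul_le_mul_of_nonneg_right _ (hW0 q)
        apply mul_le_mul_of_nonneg_left _ (by positivity)
        apply rpow_le_rpow_of_nonpos (by positivity) _ (by linarith)
        gcongr
    change c * W q - 2 * K * ((δ ^ 2) ^ 2 * ((‖q‖ ^ 2 / 18) ^ 2 + (δ ^ 2) ^ 2) ^ (-a - 1) * W q) ≤
      LL n₁ n₂ μ (FF n₁ n₂ μ (δ ^ 2)) (cc 0 q.1, cc 0 q.2) * w q * rho q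
    have hcmp2 := mul_le_mul_of_nonneg_left hcmp (by positivity : 0 ≤ 2 * K)
    refine le_trans ?_ (hlow2.trans_eq (by ring))
    change _ ≤ (c * th K (zz q) - 2 * K * ((δ ^ 2) ^ 2 * (zz q ^ 2 + (δ ^ 2) ^ 2) ^ (-a - 1)) * th K (zz q)) * (w q * rho q)
    have e : (c * th K (zz q) - 2 * K * ((δ ^ 2) ^ 2 * (zz q ^ 2 + (δ ^ 2) ^ 2) ^ (-a - 1)) * th K (zz q)) * (w q * rho q)
      = c * W q - 2 * K * ((δ ^ 2) ^ 2 * (zz q ^ 2 + (δ ^ 2) ^ 2) ^ (-a - 1) * W q) := by simp only [hW]; ring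
    rw [e]; linarith
  have hlim : Filter.Tendsto (fun k : ℕ => ∫ q, Phi q * W ((1 / ((k:ℝ) + 1)) • q)) Filter.atTop (𝓝 (∫ q : EE n₁ n₂, Phi q * W 0)) := by
    apply tendsto_integral_of_dominated_convergence (fun q => Phi q * B)
    · intro k
      exact (Phi_cont.mul (hWc.comp (by fun_prop))).aestronglyMeasurable
    · exact (Phi_integrable n₁ n₂).mul_const B
    · intro k
      refine Filter.Eventually.of_forall fun q => ?_
      rw [norm_mul, Real.norm_eq_abs, abs_of_nonneg (Phi_nonneg q)]
      exact mul_le_mul_of_nonneg_left (hB _) (Phi_nonneg q)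
    · refine Filter.Eventually.of_forall fun q => ?_
      apply Filter.Tendsto.const_mul
      have h1 : Filter.Tendsto (fun k : ℕ => (1 / ((k:ℝ) + 1)) • q) Filter.atTop (𝓝 ((0:ℝ) • q)) :=
        tendsto_one_div_add_atTop_nhds_zero_nat.smul_const q
      rw [zero_smul] at h1
      exact (hWc.tendsto 0).comp h1
  rw [integral_mul_const, ← hI] at hlim
  have hfin : c * ∫ q, W q ≤ 2 * K * (I * W 0) := by
    refine ge_of_tendsto' (hlim.const_mul (2 * K)) (fun k => step _ (by positivity) ?_)
    rw [div_le_one (by positivity)]; have : (0:ℝ) ≤ k := by positivity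
    linarith
  have hWz : W 0 = th K 0 * w 0 := by simp [hW, zz_zero, rho_zero]
  rw [hWz] at hfin
  have : ∫ q, W q ≤ (2 * K * I * th K 0 / c) * w 0 := by
    rw [div_mul_eq_mul_div, le_div_iff₀ hc]; linarith
  have := hw0 0
  linarith

/-- shrinking bump -/
noncomputable def gg (r z : ℝ) : ℝ := expNegInvGlue (r - z)

lemma gg_contDiff (r : ℝ) {m : ℕ∞} : ContDiff ℝ m (gg r) := by
  have : ContDiff ℝ m (fun z : ℝ => r - z) := by fun_prop
  exact expNegInvGlue.contDiff.comp this
lemma gg_nonneg (r z : ℝ) : 0 ≤ gg r z := expNegInvGlue.nonneg _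
lemma gg_zero {r z : ℝ} (hz : r ≤ z) : gg r z = 0 := by
  apply expNegInvGlue.zero_of_nonpos; linarith
lemma gg_pos {r z : ℝ} (hz : z < r) : 0 < gg r z := by
  apply expNegInvGlue.pos_of_pos; linarith
lemma gg_evt {r z : ℝ} (hz : r < z) : gg r =ᶠ[𝓝 z] fun _ => 0 := by
  filter_upwards [lt_mem_nhds hz] with y hy using gg_zero hy.le
lemma gg_deriv {r z : ℝ} (hz : r < z) : deriv (gg r) z = 0 := by
  rw [(gg_evt hz).deriv_eq]; simp
lemma gg_deriv2 {r z : ℝ} (hz : r < z) : deriv (deriv (gg r)) z = 0 := by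
  have : deriv (gg r) =ᶠ[𝓝 z] fun _ => 0 := by
    filter_upwards [lt_mem_nhds hz] with y hy using gg_deriv hy
  rw [this.deriv_eq]; simp

noncomputable def F0 (r : ℝ) (x : ℝ × ℝ) : ℝ := gg r (x.1 + x.2 - 2)

lemma F0_contDiff (r : ℝ) {m : ℕ∞} : ContDiff ℝ m (F0 r) := by
  have : ContDiff ℝ m (fun x : ℝ × ℝ => x.1 + x.2 - 2) := by fun_prop
  exact (gg_contDiff r).comp this

lemma F0_van (r : ℝ) : Van (F0 r) := ⟨r + 2, fun x hx => gg_zero (by linarith)⟩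

noncomputable def dd (n : ℕ) (μ₁ r : ℝ) (x : ℝ × ℝ) : ℝ := L1 n (F0 r) x + μ₁ * F0 r x

lemma dd_contDiff (n : ℕ) (μ₁ r : ℝ) : ContDiff ℝ 2 (dd n μ₁ r) := by
  have h4 : ContDiff ℝ ((2 : WithTop ℕ∞) + 1 + 1) (F0 r) := by
    have := F0_contDiff r (m := 4)
    convert this using 1
    norm_num
  have h2 : ContDiff ℝ 2 (F0 r) := F0_contDiff r (m := 2)
  exact (L1_contDiff n h4).add (contDiff_const.mul h2)

lemma dd_van (n : ℕ) (μ₁ r : ℝ) : Van (dd n μ₁ r) :=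
  ((F0_van r).L1 n).add ((F0_van r).mul_left μ₁)

lemma dd_zero (n : ℕ) (μ₁ : ℝ) {r : ℝ} {x : ℝ × ℝ} (hx : r < x.1 + x.2 - 2) : dd n μ₁ r x = 0 := by
  unfold dd
  have h := L1_zz n (G := gg r) (gg_contDiff r (m := 2)) x
  have e : L1 n (F0 r) x = 0 := by
    refine h.trans ?_
    rw [gg_deriv hx, gg_deriv2 hx]; ring
  rw [e, F0, gg_zero hx.le]; ring

lemma dd_bound (n : ℕ) (μ₁ : ℝ) {r K : ℝ} (hr : r ≤ 1 / 2) (hK : 0 < K) :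
    ∃ M, 0 < M ∧ ∀ x : ℝ × ℝ, 1 ≤ x.1 → 1 ≤ x.2 → |dd n μ₁ r x| ≤ M * th K (x.1 + x.2 - 2) := by
  have hcomp : IsCompact (Set.Icc (1:ℝ) 2 ×ˢ Set.Icc (1:ℝ) 2) := isCompact_Icc.prod isCompact_Icc
  obtain ⟨B, hB⟩ := hcomp.exists_bound_of_continuousOn (dd_contDiff n μ₁ r).continuous.continuousOn
  have ht : 0 < th K (1/2) := th_pos hK (by norm_num)
  refine ⟨(|B| + 1) / th K (1/2), by positivity, fun x h1 h2 => ?_⟩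
  rcases lt_or_ge (1/2) (x.1 + x.2 - 2) with h | h
  · rw [dd_zero n μ₁ (lt_of_le_of_lt hr h), abs_zero]
    have := th_nonneg K (x.1 + x.2 - 2)
    positivity
  · have hb := hB x ⟨⟨h1, by linarith⟩, ⟨h2, by linarith⟩⟩
    rw [Real.norm_eq_abs] at hb
    have hm := th_anti hK h
    rw [div_mul_eq_mul_div, le_div_iff₀ ht]
    have : |dd n μ₁ r x| ≤ |B| + 1 := by linarith [le_abs_self B]
    gcongr

lemma TT_dd_bound (n₁ n₂ : ℕ) (hn₁ : 1 ≤ n₁) (hn₂ : 1 ≤ n₂) (μ μ₁ : ℝ) {r : ℝ} (hr : r ≤ 1 / 2) :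
    ∃ k, 0 < k ∧ ∀ w ∈ CC n₁ n₂ μ, (∀ q, 0 ≤ w q) → ∀ p, |TT (dd n₁ μ₁ r) w p| ≤ k * w p := by
  obtain ⟨C, hC, hH⟩ := weak_harnack n₁ n₂ hn₁ hn₂ μ
  have hK := KK_pos n₁ n₂ μ
  obtain ⟨M, hM, hd⟩ := dd_bound n₁ μ₁ hr hK
  refine ⟨M * C, by positivity, fun w hw hw0 p => ?_⟩
  have hwc : Continuous w := hw.1
  set w' : EE n₁ n₂ → ℝ := fun g => w (actE p g) with hw'
  have hact : Continuous fun g : EE n₁ n₂ => actE p g := actE_cont.comp (by fun_prop : Continuous fun g : EE n₁ n₂ => (p, g))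
  have hw'c : Continuous w' := hwc.comp hact
  have h1 := hH w' hw'c (fun q => hw0 _) (fun F hF hV => by
    rw [TT_shift]; exact hw.2 F hF hV p)
  have e0 : w' 0 = w p := by simp [hw', actE_zero]
  rw [e0] at h1
  rw [← TT_shift]
  have hint := TT_integrable (n₁ := n₁) (n₂ := n₂) (F := fun x => th (KK n₁ n₂ μ) (x.1 + x.2 - 2)) 
    ((th_contDiff (KK n₁ n₂ μ) (m := 0)).continuous.comp (by fun_prop)) ⟨3, fun x hx => th_zero hK (by linarith)⟩ hw'c 0
  have h2 : |TT (dd n₁ μ₁ r) w' 0| ≤ ∫ q, M * (th (KK n₁ n₂ μ) (zz q) * w' q * rho q) := by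
    unfold TT
    rw [← Real.norm_eq_abs]
    apply norm_integral_le_of_norm_le
    · exact hint.const_mul M
    · refine Filter.Eventually.of_forall fun q => ?_
      rw [Real.norm_eq_abs, abs_mul, abs_mul, abs_of_pos (rho_pos q), abs_of_nonneg (hw0 _ : 0 ≤ w' q)]
      have := hd (cc 0 q.1, cc 0 q.2) (cc_ge_one _ _) (cc_ge_one _ _)
      have h3 := mul_le_mul_of_nonneg_right this (mul_nonneg (hw0 _ : 0 ≤ w' q) (rho_pos q).le)
      calc _ = |dd n₁ μ₁ r (cc 0 q.1, cc 0 q.2)| * (w' q * rho q) := by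
            rw [mul_assoc]; rfl
        _ ≤ _ := h3
        _ = _ := by rw [zz]; ring
  rw [integral_const_mul] at h2
  calc _ ≤ _ := h2
    _ ≤ M * (C * w p) := by gcongr
    _ = _ := by ring

noncomputable def DD (n₁ n₂ : ℕ) (μ μ₁ r : ℝ) : Module.End ℝ (CC n₁ n₂ μ) where
  toFun w := ⟨TT (dd n₁ μ₁ r) w.1, TT_mem_CC w.2 (dd_contDiff _ _ _) (dd_van _ _ _)⟩
  map_add' w w' := by
    ext p
    exact TT_add_w (dd_contDiff _ _ _).continuous (dd_van _ _ _) w.2.1 w'.2.1 p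
  map_smul' c w := by
    ext p
    exact TT_smul_w _ _ _ _

lemma TT_dd {n₁ n₂ : ℕ} (μ₁ r : ℝ) {v : EE n₁ n₂ → ℝ} (hv : ContDiff ℝ 2 v) (p : EE n₁ n₂) :
    TT (dd n₁ μ₁ r) v p = TT (F0 r) (fun q => S1 v q + μ₁ * v q) p := by
  have h2 : ContDiff ℝ 2 (F0 r) := F0_contDiff r (m := 2)
  unfold dd
  rw [TT_add_F (G := fun x => μ₁ * F0 r x) (L1_cont n₁ h2) ((F0_van r).L1 n₁) (continuous_const.mul h2.continuous) ((F0_van r).mul_left μ₁) hv.continuous,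
    TT_L1 h2 (F0_van r) hv, TT_smul_F, TT_add_w (w' := fun q => μ₁ * v q) h2.continuous (F0_van r) (S1_cont hv) (continuous_const.mul hv.continuous), TT_smul_w]

lemma localize {n₁ n₂ : ℕ} {h : EE n₁ n₂ → ℝ} (hh : Continuous h)
    (H : ∀ r : ℝ, 0 < r → r ≤ 1/2 → ∀ p, TT (F0 r) h p = 0) (p : EE n₁ n₂) : h p ≤ 0 := by
  by_contra hne
  push Not at hne
  set h' : EE n₁ n₂ → ℝ := fun g => h (actE p g) with hh'
  have hact : Continuous fun g : EE n₁ n₂ => actE p g := actE_cont.comp (by fun_prop : Continuous fun g : EE n₁ n₂ => (p, g))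
  have hc : Continuous h' := hh.comp hact
  have e0 : h' 0 = h p := by simp [hh', actE_zero]
  have hpos : ∀ᶠ g in 𝓝 (0 : EE n₁ n₂), 0 < h' g := hc.continuousAt.eventually (lt_mem_nhds (by rw [e0]; exact hne))
  obtain ⟨ε, hε, hball⟩ := Metric.eventually_nhds_iff.1 hpos
  set r := min (1/2) (ε ^ 2 / 19) with hr
  have hr0 : 0 < r := by positivity
  have hr1 : r ≤ 1/2 := min_le_left _ _
  have hr2 : r ≤ ε ^ 2 / 19 := min_le_right _ _
  have hT := H r hr0 hr1 p
  rw [TT_translate] at hT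
  have hF : Continuous (F0 r) := (F0_contDiff r (m := 0)).continuous
  have hint := TT_integrable hF (F0_van r) hc 0
  have hK : ∀ g : EE n₁ n₂, Ker (F0 r) 0 g = gg r (zz g) := fun g => rfl
  have hnn : ∀ g : EE n₁ n₂, 0 ≤ Ker (F0 r) 0 g * h' g * rho g := by
    intro g
    rcases le_or_gt r (zz g) with hz | hz
    · rw [hK, gg_zero hz]; simp
    · have h1 := zz_lower g (by linarith)
      have h2 : ‖g‖ ^ 2 < ε ^ 2 := by nlinarith [sq_nonneg ε]
      have h3 : ‖g‖ < ε := lt_of_pow_lt_pow_left₀ 2 hε.le h2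
      have h4 := hball (y := g) (by rwa [dist_zero_right])
      rw [hK]
      exact mul_nonneg (mul_nonneg (gg_nonneg _ _) h4.le) (rho_pos g).le
  have hcont : Continuous fun g : EE n₁ n₂ => Ker (F0 r) 0 g * h' g * rho g := by
    have : Continuous fun g : EE n₁ n₂ => Ker (F0 r) 0 g := (gg_contDiff r (m := 0)).continuous.comp zz_cont
    exact (this.mul hc).mul rho_cont
  have := hcont.integral_pos_of_hasCompactSupport_nonneg_nonzero (μ := volume) (x := 0) 
    (((Ker_supp (F0_van r) 0).mul_right).mul_right) hnn (by
      rw [hK, zz_zero, rho_zero, e0, mul_one]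
      exact (mul_pos (gg_pos hr0) hne).ne')
  exact this.ne' hT

theorem core {n₁ n₂ : ℕ} (hn₁ : 1 ≤ n₁) (hn₂ : 1 ≤ n₂) (μ₁ μ₂ : ℝ) {u v : EE n₁ n₂ → ℝ}
    (hu : ContDiff ℝ 2 u) (hv : ContDiff ℝ 2 v)
    (hu1 : ∀ q, S1 u q + μ₁ * u q = 0) (hu2 : ∀ q, S2 u q + μ₂ * u q = 0)
    (hvs : ∀ q, S1 v q + S2 v q + (μ₁ + μ₂) * v q = 0)
    (hv0 : ∀ q, 0 ≤ v q) (hvu : ∀ q, v q ≤ u q) (q : EE n₁ n₂) :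
    S1 v q + μ₁ * v q = 0 ∧ S2 v q + μ₂ * v q = 0 := by
  have hcont : Continuous fun q => S1 v q + μ₁ * v q := (S1_cont hv).add (continuous_const.mul hv.continuous)
  have hvC := mem_CC_of_sol hv hvs
  have huC : u ∈ CC n₁ n₂ (μ₁ + μ₂) := mem_CC_of_sol hu (fun q => by linarith [hu1 q, hu2 q])
  have key : ∀ r : ℝ, 0 < r → r ≤ 1/2 → ∀ p, TT (F0 r) (fun q => S1 v q + μ₁ * v q) p = 0 := by
    intro r _ hr p
    obtain ⟨k, hk, hb⟩ := TT_dd_bound n₁ n₂ hn₁ hn₂ (μ₁ + μ₂) μ₁ hr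
    have := binom_lemma (CC n₁ n₂ (μ₁ + μ₂)) (DD n₁ n₂ (μ₁ + μ₂) μ₁ r) k hk 
      (fun w hw x => hb w.1 w.2 hw x) ⟨u, huC⟩ ⟨v, hvC⟩ (by
        ext p
        change TT (dd n₁ μ₁ r) u p = 0
        rw [TT_dd _ _ hu]
        simp [hu1, TT]) hv0 hvu
    have h2 := congrArg (fun w : CC n₁ n₂ (μ₁ + μ₂) => w.1 p) this
    change TT (dd n₁ μ₁ r) v p = 0 at h2
    rwa [TT_dd _ _ hv] at h2
  have h1 := localize hcont key q
  have h2 := localize (h := fun q => -1 * (S1 v q + μ₁ * v q)) (continuous_const.mul hcont) (fun r h0 hr p => by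
    rw [TT_smul_w, key r h0 hr p, mul_zero]) q
  have h3 : S1 v q + μ₁ * v q = 0 := by linarith
  exact ⟨h3, by linarith [hvs q]⟩

lemma hypLap_smul (n : ℕ) (u : EuclideanSpace ℝ (Fin n) → ℝ → ℝ) (c : ℝ)
    (x : EuclideanSpace ℝ (Fin n)) (y : ℝ) :
    hypLap n (fun x y => c * u x y) x y = c * hypLap n u x y := by
  have h2 : ∀ (f : ℝ → ℝ) (t : ℝ), iteratedDeriv 2 (fun s => c * f s) t = c * iteratedDeriv 2 f t := by
    intro f t
    have e : (deriv fun s => c * f s) = fun s => c * deriv f s :=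
      funext fun s => deriv_const_mul_field c
    simp only [iteratedDeriv_succ, iteratedDeriv_zero, e, deriv_const_mul_field]
  unfold hypLap lapX
  simp only [h2, deriv_const_mul_field]
  rw [← Finset.mul_sum]
  ring

noncomputable def liftE {n₁ n₂ : ℕ}
    (v : EuclideanSpace ℝ (Fin n₁) → ℝ → EuclideanSpace ℝ (Fin n₂) → ℝ → ℝ) (q : EE n₁ n₂) : ℝ :=
  v q.1.1 (exp q.1.2) q.2.1 (exp q.2.2)

lemma prod_contDiffOn {n₁ n₂ : ℕ} {u₁ : EuclideanSpace ℝ (Fin n₁) → ℝ → ℝ}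
    {u₂ : EuclideanSpace ℝ (Fin n₂) → ℝ → ℝ}
    (c1 : ContDiffOn ℝ 2 (fun p : EuclideanSpace ℝ (Fin n₁) × ℝ => u₁ p.1 p.2) {p | 0 < p.2})
    (c2 : ContDiffOn ℝ 2 (fun p : EuclideanSpace ℝ (Fin n₂) × ℝ => u₂ p.1 p.2) {p | 0 < p.2}) :
    ContDiffOn ℝ 2
      (fun p : (EuclideanSpace ℝ (Fin n₁) × ℝ) × (EuclideanSpace ℝ (Fin n₂) × ℝ) =>
        u₁ p.1.1 p.1.2 * u₂ p.2.1 p.2.2) {p | 0 < p.1.2 ∧ 0 < p.2.2} := by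
  apply ContDiffOn.mul
  · exact c1.comp contDiff_fst.contDiffOn (fun p hp => hp.1)
  · exact c2.comp contDiff_snd.contDiffOn (fun p hp => hp.2)

section
variable {n₁ n₂ : ℕ} {v : EuclideanSpace ℝ (Fin n₁) → ℝ → EuclideanSpace ℝ (Fin n₂) → ℝ → ℝ}

lemma slice1 (hv : ContDiffOn ℝ 2
      (fun p : (EuclideanSpace ℝ (Fin n₁) × ℝ) × (EuclideanSpace ℝ (Fin n₂) × ℝ) =>
        v p.1.1 p.1.2 p.2.1 p.2.2) {p | 0 < p.1.2 ∧ 0 < p.2.2})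
    (x₂ : EuclideanSpace ℝ (Fin n₂)) {y₂ : ℝ} (h : 0 < y₂) :
    ContDiffOn ℝ 2 (fun p : EuclideanSpace ℝ (Fin n₁) × ℝ => v p.1 p.2 x₂ y₂) {p | 0 < p.2} :=
  hv.comp (f := fun p : EuclideanSpace ℝ (Fin n₁) × ℝ => (p, (x₂, y₂)))
    (by fun_prop) (fun p hp => ⟨hp, h⟩)

lemma slice2 (hv : ContDiffOn ℝ 2
      (fun p : (EuclideanSpace ℝ (Fin n₁) × ℝ) × (EuclideanSpace ℝ (Fin n₂) × ℝ) =>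
        v p.1.1 p.1.2 p.2.1 p.2.2) {p | 0 < p.1.2 ∧ 0 < p.2.2})
    (x₁ : EuclideanSpace ℝ (Fin n₁)) {y₁ : ℝ} (h : 0 < y₁) :
    ContDiffOn ℝ 2 (fun p : EuclideanSpace ℝ (Fin n₂) × ℝ => v x₁ y₁ p.1 p.2) {p | 0 < p.2} :=
  hv.comp (f := fun p : EuclideanSpace ℝ (Fin n₂) × ℝ => ((x₁, y₁), p))
    (by fun_prop) (fun p hp => ⟨h, hp⟩)

lemma lift_contDiff (hv : ContDiffOn ℝ 2
      (fun p : (EuclideanSpace ℝ (Fin n₁) × ℝ) × (EuclideanSpace ℝ (Fin n₂) × ℝ) =>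
        v p.1.1 p.1.2 p.2.1 p.2.2) {p | 0 < p.1.2 ∧ 0 < p.2.2}) : ContDiff ℝ 2 (liftE v) := by
  rw [← contDiffOn_univ]
  exact hv.comp (f := fun q : EE n₁ n₂ => ((q.1.1, exp q.1.2), (q.2.1, exp q.2.2)))
    (by unfold EE HH; fun_prop) (fun p _ => ⟨exp_pos _, exp_pos _⟩)

lemma S1_lift (hv : ContDiffOn ℝ 2
      (fun p : (EuclideanSpace ℝ (Fin n₁) × ℝ) × (EuclideanSpace ℝ (Fin n₂) × ℝ) =>
        v p.1.1 p.1.2 p.2.1 p.2.2) {p | 0 < p.1.2 ∧ 0 < p.2.2})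
    (q : EE n₁ n₂) :
    S1 (liftE v) q = hypLap1 n₁ n₂ v q.1.1 (exp q.1.2) q.2.1 (exp q.2.2) :=
  (hypLap_eq_slap n₁ (fun x y => v x y q.2.1 (exp q.2.2)) (slice1 hv _ (exp_pos _)) q.1.1 q.1.2).symm

lemma S2_lift (hv : ContDiffOn ℝ 2
      (fun p : (EuclideanSpace ℝ (Fin n₁) × ℝ) × (EuclideanSpace ℝ (Fin n₂) × ℝ) =>
        v p.1.1 p.1.2 p.2.1 p.2.2) {p | 0 < p.1.2 ∧ 0 < p.2.2})
    (q : EE n₁ n₂) :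
    S2 (liftE v) q = hypLap2 n₁ n₂ v q.1.1 (exp q.1.2) q.2.1 (exp q.2.2) :=
  (hypLap_eq_slap n₂ (v q.1.1 (exp q.1.2)) (slice2 hv _ (exp_pos _)) q.2.1 q.2.2).symm
end

/-- converse of the splitting theorem. The product of a positive minimal
C² `μ₁`-harmonic function on `ℍ^{n₁+1}` and a positive minimal C² `μ₂`-harmonic function
on `ℍ^{n₂+1}` is a positive minimal C² solution of `-(Δ₁+Δ₂)u = (μ₁+μ₂)u` on the product. -/
theorem product_of_minimal_is_minimal
    (n₁ n₂ : ℕ) (hn₁ : 1 ≤ n₁) (hn₂ : 1 ≤ n₂) (μ₁ μ₂ : ℝ)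
    (u₁ : EuclideanSpace ℝ (Fin n₁) → ℝ → ℝ) (u₂ : EuclideanSpace ℝ (Fin n₂) → ℝ → ℝ)
    (hu₁ : MinimalHarmonic n₁ μ₁ u₁) (hu₂ : MinimalHarmonic n₂ μ₂ u₂) :
    let u : EuclideanSpace ℝ (Fin n₁) → ℝ → EuclideanSpace ℝ (Fin n₂) → ℝ → ℝ :=
      fun x₁ y₁ x₂ y₂ => u₁ x₁ y₁ * u₂ x₂ y₂
    (∀ x₁, ∀ y₁ : ℝ, 0 < y₁ → ∀ x₂, ∀ y₂ : ℝ, 0 < y₂ → 0 < u x₁ y₁ x₂ y₂) ∧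
    ContDiffOn ℝ 2
      (fun p : (EuclideanSpace ℝ (Fin n₁) × ℝ) × (EuclideanSpace ℝ (Fin n₂) × ℝ) =>
        u p.1.1 p.1.2 p.2.1 p.2.2)
      {p : (EuclideanSpace ℝ (Fin n₁) × ℝ) × (EuclideanSpace ℝ (Fin n₂) × ℝ) |
        0 < p.1.2 ∧ 0 < p.2.2} ∧
    (∀ x₁, ∀ y₁ : ℝ, 0 < y₁ → ∀ x₂, ∀ y₂ : ℝ, 0 < y₂ →
      -(hypLap1 n₁ n₂ u x₁ y₁ x₂ y₂ + hypLap2 n₁ n₂ u x₁ y₁ x₂ y₂)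
        = (μ₁ + μ₂) * u x₁ y₁ x₂ y₂) ∧
    ∀ v : EuclideanSpace ℝ (Fin n₁) → ℝ → EuclideanSpace ℝ (Fin n₂) → ℝ → ℝ,
      ContDiffOn ℝ 2
        (fun p : (EuclideanSpace ℝ (Fin n₁) × ℝ) × (EuclideanSpace ℝ (Fin n₂) × ℝ) =>
          v p.1.1 p.1.2 p.2.1 p.2.2)
        {p : (EuclideanSpace ℝ (Fin n₁) × ℝ) × (EuclideanSpace ℝ (Fin n₂) × ℝ) |
          0 < p.1.2 ∧ 0 < p.2.2} →
      (∀ x₁, ∀ y₁ : ℝ, 0 < y₁ → ∀ x₂, ∀ y₂ : ℝ, 0 < y₂ →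
        -(hypLap1 n₁ n₂ v x₁ y₁ x₂ y₂ + hypLap2 n₁ n₂ v x₁ y₁ x₂ y₂)
          = (μ₁ + μ₂) * v x₁ y₁ x₂ y₂) →
      (∀ x₁, ∀ y₁ : ℝ, 0 < y₁ → ∀ x₂, ∀ y₂ : ℝ, 0 < y₂ →
        0 ≤ v x₁ y₁ x₂ y₂ ∧ v x₁ y₁ x₂ y₂ ≤ u x₁ y₁ x₂ y₂) →
      ∃ C : ℝ, C ∈ Set.Icc (0:ℝ) 1 ∧
        ∀ x₁, ∀ y₁ : ℝ, 0 < y₁ → ∀ x₂, ∀ y₂ : ℝ, 0 < y₂ →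
          v x₁ y₁ x₂ y₂ = C * u x₁ y₁ x₂ y₂ := by
  intro u
  obtain ⟨p1, c1, e1, m1⟩ := hu₁
  obtain ⟨p2, c2, e2, m2⟩ := hu₂
  have hup : ∀ x₁, ∀ y₁ : ℝ, 0 < y₁ → ∀ x₂, ∀ y₂ : ℝ, 0 < y₂ → 0 < u x₁ y₁ x₂ y₂ :=
    fun x₁ y₁ h₁ x₂ y₂ h₂ => mul_pos (p1 x₁ y₁ h₁) (p2 x₂ y₂ h₂)
  have huc := prod_contDiffOn c1 c2
  have hu1 : ∀ x₁, ∀ y₁ : ℝ, 0 < y₁ → ∀ x₂, ∀ y₂ : ℝ, 0 < y₂ →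
      hypLap1 n₁ n₂ u x₁ y₁ x₂ y₂ + μ₁ * u x₁ y₁ x₂ y₂ = 0 := by
    intro x₁ y₁ h₁ x₂ y₂ h₂
    have e : hypLap1 n₁ n₂ u x₁ y₁ x₂ y₂ = u₂ x₂ y₂ * hypLap n₁ u₁ x₁ y₁ := by
      rw [← hypLap_smul]
      simp only [hypLap1, u, mul_comm]
    have := e1 x₁ y₁ h₁
    rw [e]; simp only [u]
    linear_combination (-u₂ x₂ y₂) * this
  have hu2 : ∀ x₁, ∀ y₁ : ℝ, 0 < y₁ → ∀ x₂, ∀ y₂ : ℝ, 0 < y₂ →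
      hypLap2 n₁ n₂ u x₁ y₁ x₂ y₂ + μ₂ * u x₁ y₁ x₂ y₂ = 0 := by
    intro x₁ y₁ h₁ x₂ y₂ h₂
    have e : hypLap2 n₁ n₂ u x₁ y₁ x₂ y₂ = u₁ x₁ y₁ * hypLap n₂ u₂ x₂ y₂ :=
      hypLap_smul n₂ u₂ (u₁ x₁ y₁) x₂ y₂
    have := e2 x₂ y₂ h₂
    rw [e]; simp only [u]
    linear_combination (-u₁ x₁ y₁) * this
  refine ⟨hup, huc, fun x₁ y₁ h₁ x₂ y₂ h₂ => by
    linarith [hu1 x₁ y₁ h₁ x₂ y₂ h₂, hu2 x₁ y₁ h₁ x₂ y₂ h₂], fun v hvc hve hvb => ?_⟩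
  have hsep : ∀ x₁, ∀ y₁ : ℝ, 0 < y₁ → ∀ x₂, ∀ y₂ : ℝ, 0 < y₂ →
      hypLap1 n₁ n₂ v x₁ y₁ x₂ y₂ + μ₁ * v x₁ y₁ x₂ y₂ = 0 ∧
      hypLap2 n₁ n₂ v x₁ y₁ x₂ y₂ + μ₂ * v x₁ y₁ x₂ y₂ = 0 := by
    intro x₁ y₁ h₁ x₂ y₂ h₂
    have h := core hn₁ hn₂ μ₁ μ₂ (lift_contDiff (v := u) huc) (lift_contDiff hvc)
      (fun q => by
        rw [S1_lift (v := u) huc]; exact hu1 _ _ (exp_pos _) _ _ (exp_pos _))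
      (fun q => by
        rw [S2_lift (v := u) huc]; exact hu2 _ _ (exp_pos _) _ _ (exp_pos _))
      (fun q => by
        rw [S1_lift hvc, S2_lift hvc]
        have := hve q.1.1 _ (exp_pos q.1.2) q.2.1 _ (exp_pos q.2.2)
        unfold liftE
        linarith)
      (fun q => (hvb _ _ (exp_pos _) _ _ (exp_pos _)).1)
      (fun q => (hvb _ _ (exp_pos _) _ _ (exp_pos _)).2) ((x₁, Real.log y₁), (x₂, Real.log y₂))
    rw [S1_lift hvc, S2_lift hvc] at h
    simpa only [liftE, exp_log h₁, exp_log h₂] using h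
  have hC : ∀ x₂, ∀ y₂ : ℝ, 0 < y₂ → ∃ C : ℝ, ∀ x₁, ∀ y₁ : ℝ, 0 < y₁ →
      v x₁ y₁ x₂ y₂ = C * u₁ x₁ y₁ := by
    intro x₂ y₂ h₂
    have hp := p2 x₂ y₂ h₂
    obtain ⟨C, -, hC⟩ := m1 (fun x y => (u₂ x₂ y₂)⁻¹ * v x y x₂ y₂)
      (contDiffOn_const.mul (slice1 hvc x₂ h₂))
      (fun x y hy => by
        rw [hypLap_smul]
        have := (hsep x y hy x₂ y₂ h₂).1
        rw [hypLap1] at this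
        linear_combination (-(u₂ x₂ y₂)⁻¹) * this)
      (fun x y hy => by
        have hb := hvb x y hy x₂ y₂ h₂
        refine ⟨mul_nonneg (inv_nonneg.2 hp.le) hb.1, ?_⟩
        rw [inv_mul_le_iff₀ hp, mul_comm]
        exact hb.2)
    refine ⟨C * u₂ x₂ y₂, fun x₁ y₁ h₁ => ?_⟩
    have := hC x₁ y₁ h₁
    rw [inv_mul_eq_iff_eq_mul₀ hp.ne'] at this
    rw [this]; ring
  have q1 := p1 0 1 one_pos
  obtain ⟨C, hC01, hC2⟩ := m2 (fun x y => (u₁ 0 1)⁻¹ * v 0 1 x y)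
    (contDiffOn_const.mul (slice2 hvc 0 one_pos))
    (fun x y hy => by
      rw [hypLap_smul]
      have := (hsep 0 1 one_pos x y hy).2
      rw [hypLap2] at this
      linear_combination (-(u₁ 0 1)⁻¹) * this)
    (fun x y hy => by
      have hb := hvb 0 1 one_pos x y hy
      refine ⟨mul_nonneg (inv_nonneg.2 q1.le) hb.1, ?_⟩
      rw [inv_mul_le_iff₀ q1]
      exact hb.2)
  refine ⟨C, hC01, fun x₁ y₁ h₁ x₂ y₂ h₂ => ?_⟩
  obtain ⟨D, hD⟩ := hC x₂ y₂ h₂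
  have k1 := hC2 x₂ y₂ h₂
  rw [hD 0 1 one_pos, inv_mul_eq_iff_eq_mul₀ q1.ne'] at k1
  have k2 : D = C * u₂ x₂ y₂ := by
    apply mul_right_cancel₀ q1.ne'
    rw [k1]; ring
  rw [hD x₁ y₁ h₁, k2]
  simp only [u]; ring
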